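/- arXiv:2404.04847 — 12 statements merged into one kernel-verified Lean document; each statement's English description precedes it below -/
import Mathlib

section
/- In any many-to-one assignment game (N,v_γ), the following coalitions are inessential: (1) any coalition containing at least two firms; (2) any coalition {i}∪T with a single firm i∈F and T⊆W with |T| > r_i; (3) any one-sided coalition (contained in F or contained in W) with at least two players. -/
set_option linter.unusedSectionVars false
set_option linter.unusedVariables false

open Finset
open scoped Classical

noncomputable section

variable {F W : Type*} [Fintype F] [Fintype W]

/-- `μ` is a matching between the firm coalition `S` and the worker coalition `T`:
each firm `i ∈ S` appears in at most `r i` pairs and each worker in `T` in at most one pair. -/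
def IsMatching (r : F → ℕ) (S : Finset F) (T : Finset W) (μ : Finset (F × W)) : Prop :=
  (∀ p ∈ μ, p.1 ∈ S ∧ p.2 ∈ T) ∧
  (∀ i : F, (μ.filter fun p => p.1 = i).card ≤ r i) ∧
  (∀ j : W, (μ.filter fun p => p.2 = j).card ≤ 1)

/-- total value of a matching -/
def matchValue (A : F → W → ℝ) (μ : Finset (F × W)) : ℝ := ∑ p ∈ μ, A p.1 p.2

lemma empty_isMatching (r : F → ℕ) (S : Finset F) (T : Finset W) :
    IsMatching r S T (∅ : Finset (F × W)) := by
  refine ⟨by simp, ?_, ?_⟩ <;> intro _ <;> simp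

/-- worth of the coalition formed by firms `S` and workers `T`. -/
def vGamma (A : F → W → ℝ) (r : F → ℕ) (S : Finset F) (T : Finset W) : ℝ :=
  ((S ×ˢ T).powerset.filter fun μ => IsMatching r S T μ).sup'
    ⟨∅, Finset.mem_filter.mpr ⟨Finset.mem_powerset.mpr (Finset.empty_subset _),
        empty_isMatching r S T⟩⟩ (matchValue A)

/-- firms belonging to a coalition of `F ⊕ W` -/
def firmPart (C : Finset (F ⊕ W)) : Finset F := univ.filter (fun i => Sum.inl i ∈ C)

/-- workers belonging to a coalition of `F ⊕ W` -/
def workerPart (C : Finset (F ⊕ W)) : Finset W := univ.filter (fun j => Sum.inr j ∈ C)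

/-- the coalitional function of the many-to-one assignment game -/
def gameValue (A : F → W → ℝ) (r : F → ℕ) (C : Finset (F ⊕ W)) : ℝ :=
  vGamma A r (firmPart C) (workerPart C)

/-- core membership -/
def inCore {N : Type*} [Fintype N] (v : Finset N → ℝ) (z : N → ℝ) : Prop :=
  (∑ k, z k) = v univ ∧ ∀ C : Finset N, v C ≤ ∑ k ∈ C, z k

/-- optimal matching of the grand coalition -/
def IsOptimalMatching (A : F → W → ℝ) (r : F → ℕ) (μ : Finset (F × W)) : Prop :=
  IsMatching r univ univ μ ∧
  ∀ μ' : Finset (F × W), IsMatching r univ univ μ' → matchValue A μ' ≤ matchValue A μ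

/-- workers assigned to firm `i` under the assignment function `m` -/
def assignedTo (m : W → F) (i : F) : Finset W := univ.filter fun j => m j = i

/-- the matching associated with an assignment function (every worker matched) -/
def matchingOfFn (m : W → F) : Finset (F × W) := univ.image fun j => (m j, j)

/-- `m : W → F` represents an optimal matching of a capacity-balanced market that assigns
exactly `r i` workers to each firm `i` and leaves no worker unmatched. -/
def IsBalancedOptimal (A : F → W → ℝ) (r : F → ℕ) (m : W → F) : Prop :=
  (∀ i : F, (assignedTo m i).card = r i) ∧
  IsOptimalMatching A r (matchingOfFn m)

/-- the projection of the core to the workers' payoffs -/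
def CW (A : F → W → ℝ) (m : W → F) : Set (W → ℝ) :=
  { y | (∀ j : W, 0 ≤ y j ∧ y j ≤ A (m j) j) ∧
        ∀ j k : W, m j ≠ m k → A (m j) k - A (m j) j ≤ y k - y j }

/-- excess of a coalition at a payoff vector -/
def excess {N : Type*} (v : Finset N → ℝ) (z : N → ℝ) (S : Finset N) : ℝ :=
  v S - ∑ k ∈ S, z k

/-- maximum surplus `s_ij(z)` of `i` against `j` at `z` -/
def maxSurplus {N : Type*} (v : Finset N → ℝ) (z : N → ℝ) (i j : N) : ℝ :=
  sSup { e | ∃ S : Finset N, i ∈ S ∧ j ∉ S ∧ e = excess v z S }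

def isImputation {N : Type*} [Fintype N] (v : Finset N → ℝ) (z : N → ℝ) : Prop :=
  (∑ k, z k) = v univ ∧ ∀ k : N, v {k} ≤ z k

def inKernel {N : Type*} [Fintype N] (v : Finset N → ℝ) (z : N → ℝ) : Prop :=
  isImputation v z ∧ ∀ i j : N, i ≠ j → maxSurplus v z i j = maxSurplus v z j i

/-- A coalition is inessential if it admits a nontrivial partition into two coalitions
whose values weakly majorize its own value. -/
def Inessential {N : Type*} (v : Finset N → ℝ) (R : Finset N) : Prop :=
  ∃ S T : Finset N, S.Nonempty ∧ T.Nonempty ∧ Disjoint S T ∧ S ∪ T = R ∧ v R ≤ v S + v T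

def Essential {N : Type*} (v : Finset N → ℝ) (R : Finset N) : Prop :=
  R.Nonempty ∧ ¬ Inessential v R

/-- arcs of the tight digraph on `W ∪ {0}` (node `0` is `none`) -/
def tightArc (A : F → W → ℝ) (m : W → F) (y : W → ℝ) : Option W → Option W → Prop
  | none, none => False
  | none, some k => y k = 0
  | some j, none => y j = A (m j) j
  | some j, some k => m j ≠ m k ∧ y k - y j = A (m j) k - A (m j) j


lemma exists_opt (A : F → W → ℝ) (r : F → ℕ) (C : Finset (F ⊕ W)) :
    ∃ μ, IsMatching r (firmPart C) (workerPart C) μ ∧ gameValue A r C = matchValue A μ := by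
  unfold gameValue vGamma
  obtain ⟨μ, hμ, h⟩ := Finset.exists_mem_eq_sup'
    (s := ((firmPart C ×ˢ workerPart C).powerset.filter
      fun μ => IsMatching r (firmPart C) (workerPart C) μ))
    ⟨∅, Finset.mem_filter.mpr ⟨Finset.mem_powerset.mpr (Finset.empty_subset _),
        empty_isMatching r _ _⟩⟩ (matchValue A)
  exact ⟨μ, (Finset.mem_filter.mp hμ).2, h⟩

lemma le_gameValue (A : F → W → ℝ) (r : F → ℕ) (C : Finset (F ⊕ W)) (μ : Finset (F × W))
    (h : IsMatching r (firmPart C) (workerPart C) μ) : matchValue A μ ≤ gameValue A r C := by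
  unfold gameValue vGamma
  apply Finset.le_sup' (matchValue A)
  refine Finset.mem_filter.mpr ⟨Finset.mem_powerset.mpr ?_, h⟩
  intro p hp
  exact Finset.mem_product.mpr (h.1 p hp)

lemma inessential_of_split (A : F → W → ℝ) (r : F → ℕ) (C S : Finset (F ⊕ W))
    (μ : Finset (F × W)) (h : IsMatching r (firmPart C) (workerPart C) μ)
    (hv : gameValue A r C = matchValue A μ) (hSC : S ⊆ C) (hS : S.Nonempty)
    (hT : (C \ S).Nonempty)
    (hsplit : ∀ p ∈ μ, (Sum.inl p.1 ∈ S ↔ Sum.inr p.2 ∈ S)) :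
    Inessential (gameValue A r) C := by
  refine ⟨S, C \ S, hS, hT, Finset.disjoint_sdiff, 
    by ext x; simp only [Finset.mem_union, Finset.mem_sdiff]; have := @hSC x; tauto, ?_⟩
  have hsub : ∀ (D : Finset (F ⊕ W)) (q : F × W → Prop),
      (∀ p ∈ μ, q p → Sum.inl p.1 ∈ D ∧ Sum.inr p.2 ∈ D) →
      matchValue A (μ.filter q) ≤ gameValue A r D := by
    intro D q hq
    apply le_gameValue
    refine ⟨?_, ?_, ?_⟩
    · intro p hp
      obtain ⟨h1, h2⟩ := Finset.mem_filter.mp hp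
      simpa [firmPart, workerPart] using hq p h1 h2
    · intro i
      exact (Finset.card_le_card
        (Finset.filter_subset_filter _ (Finset.filter_subset _ _))).trans (h.2.1 i)
    · intro j
      exact (Finset.card_le_card
        (Finset.filter_subset_filter _ (Finset.filter_subset _ _))).trans (h.2.2 j)
  have h1 := hsub S (fun p => Sum.inl p.1 ∈ S) (fun p hp hq => ⟨hq, (hsplit p hp).1 hq⟩)
  have h2 := hsub (C \ S) (fun p => ¬ Sum.inl p.1 ∈ S) (fun p hp hq => by
    have := h.1 p hp
    simp only [firmPart, workerPart, Finset.mem_filter, Finset.mem_univ, true_and] at this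
    exact ⟨Finset.mem_sdiff.2 ⟨this.1, hq⟩,
      Finset.mem_sdiff.2 ⟨this.2, fun h' => hq ((hsplit p hp).2 h')⟩⟩)
  have h3 : matchValue A (μ.filter fun p => Sum.inl p.1 ∈ S)
      + matchValue A (μ.filter fun p => ¬ Sum.inl p.1 ∈ S) = matchValue A μ :=
    Finset.sum_filter_add_sum_filter_not _ _ _
  rw [hv, ← h3]
  refine add_le_add ?_ ?_
  · refine le_trans (le_of_eq ?_) h1; congr!
  · refine le_trans (le_of_eq ?_) h2; congr!

/-- inessential coalitions in many-to-one assignment games. -/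
theorem manyToOne_inessential_coalitions (A : F → W → ℝ) (r : F → ℕ)
    (hA : ∀ i j, 0 ≤ A i j) :
    (∀ C : Finset (F ⊕ W), 2 ≤ (firmPart C).card → Inessential (gameValue A r) C) ∧
    (∀ (i : F) (T : Finset W), r i < T.card →
        Inessential (gameValue A r) (insert (Sum.inl i) (T.image Sum.inr))) ∧
    (∀ C : Finset (F ⊕ W), 2 ≤ C.card →
        (firmPart C = ∅ ∨ workerPart C = ∅) → Inessential (gameValue A r) C) := by
  refine ⟨?_, ?_, ?_⟩
  · intro C hC
    obtain ⟨μ, hμ, hv⟩ := exists_opt A r C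
    obtain ⟨i, hi, k, hk, hik⟩ := Finset.one_lt_card.1 hC
    simp only [firmPart, Finset.mem_filter, Finset.mem_univ, true_and] at hi hk
    refine inessential_of_split A r C
      (C.filter fun x => x = Sum.inl i ∨ ∃ j, x = Sum.inr j ∧ (i, j) ∈ μ) μ hμ hv
      (Finset.filter_subset _ _) ⟨Sum.inl i, by simp [hi]⟩
      ⟨Sum.inl k, by simp [hk, Ne.symm hik]⟩ ?_
    rintro ⟨a, b⟩ hp
    have hab := hμ.1 _ hp
    simp only [firmPart, workerPart, Finset.mem_filter, Finset.mem_univ, true_and] at hab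
    have huniq : (i, b) ∈ μ → a = i := by
      intro h'
      have := Finset.card_le_one.1 (hμ.2.2 b) (a, b) (by simp [hp]) (i, b) (by simp [h'])
      exact (Prod.mk.inj this).1
    simp only [Finset.mem_filter, hab.1, hab.2, true_and, Sum.inl.injEq, Sum.inr.injEq,
      reduceCtorEq, false_and, exists_false, or_false, false_or, exists_eq_left']
    constructor
    · rintro rfl; exact hp
    · exact huniq
  · intro i T hT
    obtain ⟨μ, hμ, hv⟩ := exists_opt A r (insert (Sum.inl i) (T.image Sum.inr))
    have hfirm : ∀ p ∈ μ, p.1 = i := by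
      intro p hp
      simpa [firmPart] using (hμ.1 p hp).1
    have hcard : (μ.image Prod.snd).card < T.card := by
      refine lt_of_le_of_lt (Finset.card_image_le.trans ?_) hT
      have := hμ.2.1 i
      rwa [Finset.filter_true_of_mem hfirm] at this
    obtain ⟨j, hjT, hj⟩ := Finset.exists_mem_notMem_of_card_lt_card hcard
    refine inessential_of_split A r _ {Sum.inr j} μ hμ hv (by simp [hjT]) (by simp)
      ⟨Sum.inl i, by simp⟩ ?_
    intro p hp
    have : p.2 ≠ j := fun h => hj (Finset.mem_image.2 ⟨p, hp, h⟩)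
    simp [this]
  · intro C hC h
    obtain ⟨μ, hμ, hv⟩ := exists_opt A r C
    obtain ⟨x, hx, y, hy, hxy⟩ := Finset.one_lt_card.1 hC
    refine inessential_of_split A r C {x} μ hμ hv (by simpa using hx) (by simp)
      ⟨y, by simp [hy, Ne.symm hxy]⟩ ?_
    intro p hp
    have := hμ.1 p hp
    rcases h with h | h <;> simp [h] at this

end
end

section
/- Let γ=(F,W,A,r) be a capacity-balanced many-to-one assignment market and μ an optimal matching. Then (x,y)∈ℝ^F×ℝ^W belongs to the core C(v_γ) of the associated game if and only if: (i) 0 ≤ y_j ≤ a_{j^μ j} for all j∈W; (ii) y_k − y_j ≥ a_{j^μ k} − a_{j^μ j} for all j,k∈W with j^μ ≠ k^μ; and (iii) x_i = Σ_{j∈μ(i)} (a_{ij} − y_j) for all i∈F. -/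
set_option linter.unusedSectionVars false
set_option linter.unusedVariables false

open Finset
open scoped Classical

noncomputable section

variable {F W : Type*} [Fintype F] [Fintype W]

lemma aux_sum_le {W : Type*} (f : W → ℝ) (P B : Finset W) (hc : P.card ≤ B.card)
    (h0 : ∀ j ∈ B, 0 ≤ f j) (h1 : ∀ j ∈ B, ∀ k ∈ P, k ∉ B → f k ≤ f j) :
    ∑ j ∈ P, f j ≤ ∑ j ∈ B, f j := by
  have hP := Finset.sum_inter_add_sum_sdiff P B f
  have hB := Finset.sum_inter_add_sum_sdiff B P f
  have cP := Finset.card_inter_add_card_sdiff P B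
  have cB := Finset.card_inter_add_card_sdiff B P
  rw [Finset.inter_comm] at hB cB
  have hcard : (P \ B).card ≤ (B \ P).card := by omega
  suffices ∑ j ∈ P \ B, f j ≤ ∑ j ∈ B \ P, f j by linarith
  rcases (B \ P).eq_empty_or_nonempty with he | hne
  · rw [he] at hcard
    have : P \ B = ∅ := by simpa using hcard
    simp [he, this]
  · obtain ⟨c, hcm, hmin⟩ := Finset.exists_min_image (B \ P) f hne
    have hcB := (Finset.mem_sdiff.mp hcm).1
    calc ∑ j ∈ P \ B, f j ≤ (P \ B).card • f c := by
            apply Finset.sum_le_card_nsmul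
            intro k hk
            rw [Finset.mem_sdiff] at hk
            exact h1 c hcB k hk.1 hk.2
      _ ≤ (B \ P).card • f c := nsmul_le_nsmul_left (h0 c hcB) hcard
      _ ≤ _ := Finset.card_nsmul_le_sum _ _ _ hmin

lemma aux_le_vGamma {F W : Type*} [Fintype F] [Fintype W] (A : F → W → ℝ) (r : F → ℕ)
    (S : Finset F) (T : Finset W) (μ : Finset (F × W)) (h : IsMatching r S T μ) :
    matchValue A μ ≤ vGamma A r S T := by
  apply Finset.le_sup' (matchValue A)
  rw [Finset.mem_filter, Finset.mem_powerset]
  exact ⟨fun p hp => Finset.mem_product.mpr (h.1 p hp), h⟩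

lemma aux_firm {F W : Type*} [Fintype F] [Fintype W] (A : F → W → ℝ) (r : F → ℕ)
    (i : F) (T : Finset W) (hT : T.card ≤ r i) :
    ∑ j ∈ T, A i j ≤ vGamma A r {i} T := by
  have h : IsMatching r {i} T (T.image fun j => (i, j)) := by
    refine ⟨?_, ?_, ?_⟩
    · intro p hp
      obtain ⟨j, hj, rfl⟩ := Finset.mem_image.mp hp
      simp [hj]
    · intro i'
      by_cases hi : i = i'
      · subst hi
        exact (Finset.card_filter_le _ _).trans (Finset.card_image_le.trans hT)
      · rw [Finset.filter_eq_empty_iff.mpr]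
        · simp
        · intro p hp
          obtain ⟨j, hj, rfl⟩ := Finset.mem_image.mp hp
          exact hi
    · intro j
      rw [Finset.card_le_one]
      intro a ha b hb
      simp only [Finset.mem_filter, Finset.mem_image] at ha hb
      obtain ⟨⟨_, _, rfl⟩, h1⟩ := ha
      obtain ⟨⟨_, _, rfl⟩, h2⟩ := hb
      simp_all
  have := aux_le_vGamma A r _ _ _ h
  unfold matchValue at this
  rwa [Finset.sum_image (by intro a _ b _ h; simpa using h)] at this

lemma aux_sum_coal {F W : Type*} [Fintype F] [Fintype W] (C : Finset (F ⊕ W))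
    (x : F → ℝ) (y : W → ℝ) : ∑ k ∈ C, Sum.elim x y k =
      ∑ i ∈ firmPart C, x i + ∑ j ∈ workerPart C, y j := by
  have h : C = (firmPart C).disjSum (workerPart C) := by
    ext k
    rcases k with k | k <;> simp [firmPart, workerPart]
  conv_lhs => rw [h]
  rw [Finset.sum_disjSum]
  simp

lemma aux_total {F W : Type*} [Fintype F] [Fintype W] (A : F → W → ℝ) (r : F → ℕ)
    (m : W → F) (hm : IsBalancedOptimal A r m) :
    gameValue A r univ = ∑ i, ∑ j ∈ assignedTo m i, A i j := by
  have hv : matchValue A (matchingOfFn m) = ∑ i, ∑ j ∈ assignedTo m i, A i j := by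
    unfold matchValue matchingOfFn assignedTo
    rw [Finset.sum_image (by intro a _ b _ h; simpa using congrArg Prod.snd h),
      ← Finset.sum_fiberwise univ m]
    refine Finset.sum_congr rfl fun i _ => Finset.sum_congr rfl fun j hj => ?_
    rw [(Finset.mem_filter.mp hj).2]
  have h1 : firmPart (univ : Finset (F ⊕ W)) = univ := by simp [firmPart]
  have h2 : workerPart (univ : Finset (F ⊕ W)) = univ := by simp [workerPart]
  rw [← hv, gameValue, h1, h2]
  apply le_antisymm
  · apply Finset.sup'_le
    intro μ hμ
    exact hm.2.2 μ (Finset.mem_filter.mp hμ).2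
  · exact aux_le_vGamma A r _ _ _ hm.2.1

theorem core_characterization (A : F → W → ℝ) (r : F → ℕ)
    (hA : ∀ i j, 0 ≤ A i j) (hbal : ∑ i, r i = Fintype.card W)
    (m : W → F) (hm : IsBalancedOptimal A r m) (x : F → ℝ) (y : W → ℝ) :
    inCore (gameValue A r) (Sum.elim x y) ↔
      ((∀ j : W, 0 ≤ y j ∧ y j ≤ A (m j) j) ∧
       (∀ j k : W, m j ≠ m k → A (m j) k - A (m j) j ≤ y k - y j) ∧
       (∀ i : F, x i = ∑ j ∈ assignedTo m i, (A i j - y j))) := by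
  have hW : ∑ j, y j = ∑ i, ∑ j ∈ assignedTo m i, y j := by
    unfold assignedTo
    rw [← Finset.sum_fiberwise univ m]
  unfold inCore
  rw [aux_total A r m hm, Fintype.sum_sum_type]
  simp only [Sum.elim_inl, Sum.elim_inr, aux_sum_coal, gameValue]
  rw [hW]
  constructor
  · rintro ⟨htot, hC⟩
    have hy : ∀ j, 0 ≤ y j := by
      intro j
      have := hC {Sum.inr j}
      have h1 : firmPart ({Sum.inr j} : Finset (F ⊕ W)) = ∅ := by simp [firmPart]
      have h2 : workerPart ({Sum.inr j} : Finset (F ⊕ W)) = {j} := by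
        ext; simp [workerPart]
      rw [h1, h2] at this
      have h3 := aux_le_vGamma A r ∅ {j} ∅ (empty_isMatching r _ _)
      simp [matchValue] at this h3
      linarith
    have key : ∀ i (T : Finset W), T.card ≤ r i → ∑ j ∈ T, (A i j - y j) ≤ x i := by
      intro i T hT
      have := hC (({i} : Finset F).disjSum T)
      have h1 : firmPart (({i} : Finset F).disjSum T) = {i} := by ext; simp [firmPart]
      have h2 : workerPart (({i} : Finset F).disjSum T) = T := by ext; simp [workerPart]
      rw [h1, h2, Finset.sum_singleton] at this
      have h3 := aux_firm A r i T hT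
      rw [Finset.sum_sub_distrib]
      linarith
    have hx : ∀ i, x i = ∑ j ∈ assignedTo m i, (A i j - y j) := by
      have hle : ∀ i ∈ univ, ∑ j ∈ assignedTo m i, (A i j - y j) ≤ x i :=
        fun i _ => key i _ (hm.1 i).le
      have heq : ∑ i, ∑ j ∈ assignedTo m i, (A i j - y j) = ∑ i, x i := by
        simp only [Finset.sum_sub_distrib]
        linarith
      intro i
      exact ((Finset.sum_eq_sum_iff_of_le hle).mp heq i (Finset.mem_univ i)).symm
    have hmem : ∀ j, j ∈ assignedTo m (m j) := by intro j; simp [assignedTo]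
    have hsplit : ∀ j, x (m j) = (A (m j) j - y j) +
        ∑ k ∈ (assignedTo m (m j)).erase j, (A (m j) k - y k) := by
      intro j
      rw [hx]
      exact (Finset.add_sum_erase _ (fun k => A (m j) k - y k) (hmem j)).symm
    have hce : ∀ j, ((assignedTo m (m j)).erase j).card + 1 = r (m j) := by
      intro j
      rw [Finset.card_erase_add_one (hmem j), hm.1]
    refine ⟨fun j => ⟨hy j, ?_⟩, ?_, hx⟩
    · have := key (m j) _ ((Nat.le_succ _).trans (hce j).le)
      linarith [hsplit j]
    · intro j k hjk
      have hk : k ∉ (assignedTo m (m j)).erase j := by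
        simp [assignedTo]; intro _ h; exact hjk h.symm
      have := key (m j) (insert k ((assignedTo m (m j)).erase j))
        ((Finset.card_insert_le _ _).trans (hce j).le)
      rw [Finset.sum_insert hk] at this
      linarith [hsplit j]
  · rintro ⟨hy, hyy, hx⟩
    refine ⟨?_, fun C => ?_⟩
    · simp only [hx, Finset.sum_sub_distrib]
      ring
    · apply Finset.sup'_le
      intro μ hμ
      have hM := (Finset.mem_filter.mp hμ).2
      generalize firmPart C = S at *
      generalize workerPart C = T at *
      have hinj2 : Set.InjOn Prod.snd (μ : Set (F × W)) := by
        intro p hp q hq hpq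
        exact Finset.card_le_one.mp (hM.2.2 q.2) p (by simpa using ⟨hp, hpq⟩) q
          (by simpa using hq)
      have hworkers : ∑ p ∈ μ, y p.2 ≤ ∑ j ∈ T, y j := by
        rw [← Finset.sum_image (f := y) hinj2]
        apply Finset.sum_le_sum_of_subset_of_nonneg
        · intro j hj
          obtain ⟨p, hp, rfl⟩ := Finset.mem_image.mp hj
          exact (hM.1 p hp).2
        · exact fun j _ _ => (hy j).1
      have hfirms : ∑ p ∈ μ, (A p.1 p.2 - y p.2) ≤ ∑ i ∈ S, x i := by
        rw [← Finset.sum_fiberwise_of_maps_to (fun p hp => (hM.1 p hp).1)]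
        refine Finset.sum_le_sum fun i _ => ?_
        have hin : Set.InjOn Prod.snd ((μ.filter fun p => p.1 = i : Finset (F × W)) : Set (F × W)) :=
          hinj2.mono (by intro p hp; exact (Finset.mem_filter.mp hp).1)
        have he : ∑ p ∈ μ with p.1 = i, (A p.1 p.2 - y p.2) =
            ∑ j ∈ (μ.filter fun p => p.1 = i).image Prod.snd, (A i j - y j) := by
          rw [Finset.sum_image hin]
          refine Finset.sum_congr rfl fun p hp => ?_
          rw [(Finset.mem_filter.mp hp).2]
        rw [he, hx i]
        apply aux_sum_le
        · rw [hm.1]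
          exact Finset.card_image_le.trans (hM.2.1 i)
        · intro j hj
          have : m j = i := by simpa [assignedTo] using hj
          subst this
          linarith [(hy j).2]
        · intro j hj k _ hk
          have : m j = i := by simpa [assignedTo] using hj
          subst this
          have := hyy j k (by intro h; apply hk; simp [assignedTo, h])
          linarith
      rw [Finset.sum_sub_distrib] at hfirms
      unfold matchValue
      linarith

end
end

section
/- Consider the many-to-one assignment market with firms F={f_1,f_2} of capacities r=(2,2), workers W={w_1,w_2,w_3}, and valuations a_{ij}=1 for all i∈F, j∈W. For the associated game v_γ: (1) the core consists of the single point (x_1,x_2;y_1,y_2,y_3)=(0,0;1,1,1); (2) the kernel equals the segment {(α,α; 1−2α/3, 1−2α/3, 1−2α/3) : 0 ≤ α ≤ 3/2}; consequently the kernel is not a subset of the core. -/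
set_option linter.unusedSectionVars false
set_option linter.unusedVariables false

open Finset
open scoped Classical

noncomputable section

variable {F W : Type*} [Fintype F] [Fintype W]

abbrev exV : Finset (Fin 2 ⊕ Fin 3) → ℝ :=
  gameValue (fun (_ : Fin 2) (_ : Fin 3) => (1 : ℝ)) (fun _ => 2)

lemma ex_upper (S : Finset (Fin 2)) (T : Finset (Fin 3)) (μ : Finset (Fin 2 × Fin 3))
    (h : IsMatching (fun _ => 2) S T μ) : μ.card ≤ min (2 * S.card) T.card := by
  obtain ⟨h1, h2, h3⟩ := h
  apply le_min
  · have := Finset.card_le_mul_card_image_of_maps_to (f := Prod.fst) (s := μ) (t := S)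
      (fun p hp => (h1 p hp).1) 2 (fun b _ => by convert h2 b)
    exact this
  · have := Finset.card_le_mul_card_image_of_maps_to (f := Prod.snd) (s := μ) (t := T)
      (fun p hp => (h1 p hp).2) 1 (fun b _ => by convert h3 b)
    simpa using this

lemma ex_lower (S : Finset (Fin 2)) (T : Finset (Fin 3)) :
    ∃ μ : Finset (Fin 2 × Fin 3), IsMatching (fun _ => 2) S T μ ∧
      min (2 * S.card) T.card ≤ μ.card := by
  obtain ⟨T', hT', hc⟩ := Finset.exists_subset_card_eq (min_le_right (2 * S.card) T.card)
  by_cases hS : ∃ i, S = {i}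
  · obtain ⟨i, rfl⟩ := hS
    refine ⟨T'.image (fun j => (i, j)), ⟨?_, ?_, ?_⟩, ?_⟩
    · intro p hp
      simp only [Finset.mem_image] at hp
      obtain ⟨j, hj, rfl⟩ := hp
      exact ⟨by simp, hT' hj⟩
    · intro k
      have hle : T'.card ≤ 2 := by simp at hc; omega
      refine le_trans (Finset.card_le_card (t := T'.image (fun j => (i, j))) ?_)
        (Finset.card_image_le.trans hle)
      intro p hp
      simp only [Finset.mem_filter] at hp
      exact hp.1
    · intro j
      rw [Finset.card_le_one]
      simp only [Finset.mem_filter, Finset.mem_image]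
      rintro _ ⟨⟨a, _, rfl⟩, ha⟩ _ ⟨⟨b, _, rfl⟩, hb⟩
      simp_all
    · rw [Finset.card_image_of_injective _ (fun a b h => by simpa using h), hc]
  by_cases hS' : S = ∅
  · exact ⟨∅, empty_isMatching _ _ _, by simp [hS']⟩
  have hU : ∀ i, i ∈ S := by
    intro i
    by_contra hi
    apply hS
    obtain ⟨k, hk⟩ := Finset.nonempty_iff_ne_empty.mpr hS'
    refine ⟨k, Finset.eq_singleton_iff_unique_mem.mpr ⟨hk, ?_⟩⟩
    intro l hl
    have h1 : l ≠ i := by rintro rfl; exact hi hl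
    have h2 : k ≠ i := by rintro rfl; exact hi hk
    omega
  let g : Fin 3 → Fin 2 := fun j => if j = 0 then 0 else 1
  refine ⟨T'.image (fun j => (g j, j)), ⟨?_, ?_, ?_⟩, ?_⟩
  · intro p hp
    simp only [Finset.mem_image] at hp
    obtain ⟨j, hj, rfl⟩ := hp
    exact ⟨hU _, hT' hj⟩
  · intro k
    have : ((T'.image (fun j => (g j, j))).filter fun p => p.1 = k) ⊆
        (Finset.univ.filter (fun j => g j = k)).image (fun j => (g j, j)) := by
      intro p hp
      simp only [Finset.mem_filter, Finset.mem_image] at hp ⊢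
      obtain ⟨⟨j, hj, rfl⟩, hk⟩ := hp
      exact ⟨j, ⟨by simp, hk⟩, rfl⟩
    have h2 : (Finset.univ.filter (fun j => g j = k)).card ≤ 2 := by
      rw [Finset.card_filter, Fin.sum_univ_three]
      fin_cases k <;> simp [g]
    have h3 := (Finset.card_le_card this).trans (Finset.card_image_le.trans h2)
    refine le_trans (le_of_eq ?_) h3
    congr
  · intro j
    rw [Finset.card_le_one]
    simp only [Finset.mem_filter, Finset.mem_image]
    rintro _ ⟨⟨a, _, rfl⟩, ha⟩ _ ⟨⟨b, _, rfl⟩, hb⟩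
    simp_all
  · rw [Finset.card_image_of_injective _ (fun a b h => by simpa using (congrArg Prod.snd h)), hc]

lemma exV_eq (C : Finset (Fin 2 ⊕ Fin 3)) :
    exV C = ((min (2 * (firmPart C).card) (workerPart C).card : ℕ) : ℝ) := by
  unfold exV gameValue vGamma
  apply le_antisymm
  · apply Finset.sup'_le
    intro μ hμ
    have := ex_upper _ _ _ (Finset.mem_filter.mp hμ).2
    simp only [matchValue, Finset.sum_const, nsmul_eq_mul, mul_one]
    exact_mod_cast this
  · obtain ⟨μ, h1, h2⟩ := ex_lower (firmPart C) (workerPart C)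
    have h3 : matchValue (fun (_ : Fin 2) (_ : Fin 3) => (1 : ℝ)) μ = μ.card := by
      simp [matchValue]
    refine le_trans (b := matchValue (fun (_ : Fin 2) (_ : Fin 3) => (1 : ℝ)) μ) ?_ ?_
    · rw [h3]; exact_mod_cast h2
    · apply Finset.le_sup' (matchValue (fun (_ : Fin 2) (_ : Fin 3) => (1 : ℝ)))
      refine Finset.mem_filter.mpr ⟨Finset.mem_powerset.mpr ?_, h1⟩
      intro p hp
      exact Finset.mem_product.mpr (h1.1 p hp)

lemma ex_firm_card (C : Finset (Fin 2 ⊕ Fin 3)) :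
    (firmPart C).card = (if Sum.inl 0 ∈ C then 1 else 0) + (if Sum.inl 1 ∈ C then 1 else 0) := by
  unfold firmPart
  rw [Finset.card_filter, Fin.sum_univ_two]
  congr

lemma ex_worker_card (C : Finset (Fin 2 ⊕ Fin 3)) :
    (workerPart C).card = (if Sum.inr 0 ∈ C then 1 else 0) + (if Sum.inr 1 ∈ C then 1 else 0)
      + (if Sum.inr 2 ∈ C then 1 else 0) := by
  unfold workerPart
  rw [Finset.card_filter, Fin.sum_univ_three]
  congr

lemma ex_sum (z : Fin 2 ⊕ Fin 3 → ℝ) (C : Finset (Fin 2 ⊕ Fin 3)) :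
    ∑ k ∈ C, z k = ∑ i ∈ firmPart C, z (Sum.inl i) + ∑ j ∈ workerPart C, z (Sum.inr j) := by
  unfold firmPart workerPart
  have h := Fintype.sum_sum_type (fun k => if k ∈ C then z k else 0)
  rw [Finset.sum_filter, Finset.sum_filter]
  simp only [Finset.sum_ite_mem, Finset.univ_inter] at h
  rw [h]
  congr 1 <;> (apply Finset.sum_congr rfl; intro a _; congr)

lemma ex_surplus {N : Type*} [Fintype N] (v : Finset N → ℝ) (z : N → ℝ) (i j : N) (h : i ≠ j) :
    (∃ C, i ∈ C ∧ j ∉ C ∧ maxSurplus v z i j = excess v z C) ∧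
    ∀ C, i ∈ C → j ∉ C → excess v z C ≤ maxSurplus v z i j := by
  have hf : { e | ∃ S : Finset N, i ∈ S ∧ j ∉ S ∧ e = excess v z S }.Finite :=
    (Set.finite_range (excess v z)).subset (by rintro _ ⟨S, _, _, rfl⟩; exact ⟨S, rfl⟩)
  have hn : { e | ∃ S : Finset N, i ∈ S ∧ j ∉ S ∧ e = excess v z S }.Nonempty :=
    ⟨_, {i}, by simp, by simpa using h.symm, rfl⟩
  exact ⟨hn.csSup_mem hf, fun C h1 h2 => le_csSup hf.bddAbove ⟨C, h1, h2, rfl⟩⟩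

lemma ex_swap {N : Type*} [Fintype N] [DecidableEq N] (v : Finset N → ℝ) (z : N → ℝ) (i j : N) (h : i ≠ j)
    (hv : ∀ C, i ∈ C → j ∉ C → v (insert j (C.erase i)) = v C) :
    maxSurplus v z i j + z i - z j ≤ maxSurplus v z j i := by
  obtain ⟨C, h1, h2, h3⟩ := (ex_surplus v z i j h).1
  have h4 := (ex_surplus v z j i h.symm).2 (insert j (C.erase i)) (by simp) (by simp [h])
  have h5 : excess v z (insert j (C.erase i)) = excess v z C + z i - z j := by
    unfold excess
    rw [hv C h1 h2, Finset.sum_insert (by simp [h2]), ← Finset.add_sum_erase C z h1]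
    ring
  linarith

lemma ex_vf (a b : Fin 2) (h : a ≠ b) (C : Finset (Fin 2 ⊕ Fin 3)) (h1 : Sum.inl a ∈ C)
    (h2 : Sum.inl b ∉ C) : exV (insert (Sum.inl b) (C.erase (Sum.inl a))) = exV C := by
  rw [exV_eq, exV_eq, ex_firm_card, ex_firm_card, ex_worker_card, ex_worker_card]
  fin_cases a <;> fin_cases b <;> simp_all

lemma ex_vw (a b : Fin 3) (h : a ≠ b) (C : Finset (Fin 2 ⊕ Fin 3)) (h1 : Sum.inr a ∈ C)
    (h2 : Sum.inr b ∉ C) : exV (insert (Sum.inr b) (C.erase (Sum.inr a))) = exV C := by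
  rw [exV_eq, exV_eq, ex_firm_card, ex_firm_card, ex_worker_card, ex_worker_card]
  fin_cases a <;> fin_cases b <;> simp_all [add_comm, add_left_comm]

lemma exV_univ : exV univ = 3 := by
  rw [exV_eq, ex_firm_card, ex_worker_card]; simp

lemma ex_core (z : Fin 2 ⊕ Fin 3 → ℝ) :
    inCore exV z ↔ z = Sum.elim (fun _ => (0 : ℝ)) (fun _ => (1 : ℝ)) := by
  constructor
  · rintro ⟨h1, h2⟩
    rw [exV_univ] at h1
    simp [Fin.sum_univ_two, Fin.sum_univ_three] at h1
    have key : ∀ (i : Fin 2) (j k : Fin 3), j ≠ k →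
        2 ≤ z (.inl i) + (z (.inr j) + z (.inr k)) := by
      intro i j k hjk
      have := h2 {.inl i, .inr j, .inr k}
      rw [exV_eq, ex_firm_card, ex_worker_card, Finset.sum_insert (by simp),
        Finset.sum_insert (by simpa using hjk), Finset.sum_singleton] at this
      refine le_trans ?_ this
      fin_cases i <;> fin_cases j <;> fin_cases k <;> simp_all
    have key2 : ∀ (i : Fin 2) (j : Fin 3), 1 ≤ z (.inl i) + z (.inr j) := by
      intro i j
      have := h2 {.inl i, .inr j}
      rw [exV_eq, ex_firm_card, ex_worker_card, Finset.sum_insert (by simp),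
        Finset.sum_singleton] at this
      refine le_trans ?_ this
      fin_cases i <;> fin_cases j <;> simp
    have a1 := key 0 0 1 (by decide)
    have a2 := key 0 0 2 (by decide)
    have a3 := key 0 1 2 (by decide)
    have b1 := key 1 0 1 (by decide)
    have b2 := key 1 0 2 (by decide)
    have b3 := key 1 1 2 (by decide)
    have c1 := key2 0 0
    have c2 := key2 0 1
    have c3 := key2 0 2
    have d1 := key2 1 0
    have d2 := key2 1 1
    have d3 := key2 1 2
    funext k
    rcases k with k | k <;> fin_cases k <;> simp <;> linarith
  · rintro rfl
    refine ⟨?_, fun C => ?_⟩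
    · rw [exV_univ]; simp
    · rw [exV_eq, ex_sum]
      simp

lemma ex_bound (α : ℝ) (h0 : 0 ≤ α) (h1 : α ≤ 3 / 2) (C : Finset (Fin 2 ⊕ Fin 3))
    (hC : ∃ k, k ∉ C) :
    excess exV (Sum.elim (fun _ => α) (fun _ => 1 - 2 * α / 3)) C ≤ α / 3 := by
  unfold excess
  rw [exV_eq, ex_sum]
  simp only [Sum.elim_inl, Sum.elim_inr, Finset.sum_const, nsmul_eq_mul]
  have hs : (firmPart C).card ≤ 2 := by simpa using Finset.card_le_univ (firmPart C)
  have ht : (workerPart C).card ≤ 3 := by simpa using Finset.card_le_univ (workerPart C)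
  have hne : ¬ ((firmPart C).card = 2 ∧ (workerPart C).card = 3) := by
    rintro ⟨e1, e2⟩
    have e1' := (Finset.card_eq_iff_eq_univ _).mp (e1.trans (by simp))
    have e2' := (Finset.card_eq_iff_eq_univ _).mp (e2.trans (by simp))
    obtain ⟨k, hk⟩ := hC
    rcases k with k | k
    · have := Finset.mem_univ k
      rw [← e1'] at this
      exact hk (by simpa [firmPart] using this)
    · have := Finset.mem_univ k
      rw [← e2'] at this
      exact hk (by simpa [workerPart] using this)
  generalize (firmPart C).card = s at *
  generalize (workerPart C).card = t at *
  interval_cases s <;> interval_cases t <;> simp at hne ⊢ <;> linarith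

lemma ex_attain (α : ℝ) (i : Fin 2) (j k : Fin 3) (h : j ≠ k) :
    excess exV (Sum.elim (fun _ => α) (fun _ => 1 - 2 * α / 3)) {.inl i, .inr j, .inr k}
      = α / 3 := by
  unfold excess
  rw [Finset.sum_insert (by simp), Finset.sum_insert (by simpa using h), Finset.sum_singleton]
  have : exV {.inl i, .inr j, .inr k} = 2 := by
    rw [exV_eq, ex_firm_card, ex_worker_card]
    fin_cases i <;> fin_cases j <;> fin_cases k <;> simp_all
  rw [this]
  simp
  ring

lemma ex_fw (α : ℝ) (h0 : 0 ≤ α) (h1 : α ≤ 3 / 2) (i : Fin 2) (j : Fin 3) :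
    maxSurplus exV (Sum.elim (fun _ => α) (fun _ => 1 - 2 * α / 3)) (.inl i) (.inr j) = α / 3 ∧
    maxSurplus exV (Sum.elim (fun _ => α) (fun _ => 1 - 2 * α / 3)) (.inr j) (.inl i) = α / 3 := by
  constructor
  · obtain ⟨⟨C, _, c2, c3⟩, hle⟩ := ex_surplus exV
      (Sum.elim (fun _ => α) (fun _ => 1 - 2 * α / 3)) (.inl i) (.inr j) (by simp)
    apply le_antisymm
    · rw [c3]; exact ex_bound α h0 h1 C ⟨_, c2⟩
    · rw [← ex_attain α i (j + 1) (j + 2) (by clear * -; revert j; decide)]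
      apply hle
      · simp
      · revert j; simp
  · obtain ⟨⟨C, _, c2, c3⟩, hle⟩ := ex_surplus exV
      (Sum.elim (fun _ => α) (fun _ => 1 - 2 * α / 3)) (.inr j) (.inl i) (by simp)
    apply le_antisymm
    · rw [c3]; exact ex_bound α h0 h1 C ⟨_, c2⟩
    · rw [← ex_attain α (i + 1) j (j + 1) (by clear * -; revert j; decide)]
      apply hle
      · simp
      · revert i; simp

lemma ex_kernel (z : Fin 2 ⊕ Fin 3 → ℝ) :
    inKernel exV z ↔ ∃ α : ℝ, 0 ≤ α ∧ α ≤ 3 / 2 ∧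
            z = Sum.elim (fun _ => α) (fun _ => 1 - 2 * α / 3) := by
  have hv0 : ∀ k, exV {k} = 0 := by
    intro k
    rw [exV_eq, ex_firm_card, ex_worker_card]
    rcases k with k | k <;> simp
  constructor
  · rintro ⟨⟨h1, h2⟩, h3⟩
    rw [exV_univ] at h1
    simp [Fin.sum_univ_two, Fin.sum_univ_three] at h1
    simp only [hv0] at h2
    have hf : ∀ a b : Fin 2, a ≠ b → z (.inl a) ≤ z (.inl b) := by
      intro a b h
      have h' : (Sum.inl a : Fin 2 ⊕ Fin 3) ≠ .inl b := by simpa using h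
      have := ex_swap exV z _ _ h' (ex_vf a b h)
      have := h3 _ _ h'
      linarith
    have hw : ∀ a b : Fin 3, a ≠ b → z (.inr a) ≤ z (.inr b) := by
      intro a b h
      have h' : (Sum.inr a : Fin 2 ⊕ Fin 3) ≠ .inr b := by simpa using h
      have := ex_swap exV z _ _ h' (ex_vw a b h)
      have := h3 _ _ h'
      linarith
    have a1 := hf 0 1 (by decide)
    have a2 := hf 1 0 (by decide)
    have b1 := hw 0 1 (by decide)
    have b2 := hw 1 2 (by decide)
    have b3 := hw 2 0 (by decide)
    have p := h2 (.inl 0)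
    have q := h2 (.inr 0)
    refine ⟨z (.inl 0), p, by linarith, ?_⟩
    funext k
    rcases k with k | k <;> fin_cases k <;> simp <;> linarith
  · rintro ⟨α, h0, h1, rfl⟩
    refine ⟨⟨?_, ?_⟩, ?_⟩
    · rw [exV_univ]; simp; ring
    · intro k
      rw [hv0]
      rcases k with k | k <;> simp <;> linarith
    · rintro (a | a) (b | b) h
      · have h' : a ≠ b := by simpa using h
        have e1 := ex_swap exV (Sum.elim (fun _ => α) (fun _ => 1 - 2 * α / 3)) _ _ h
          (ex_vf a b h')
        have e2 := ex_swap exV (Sum.elim (fun _ => α) (fun _ => 1 - 2 * α / 3)) _ _ h.symm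
          (ex_vf b a h'.symm)
        simp only [Sum.elim_inl] at e1 e2
        linarith
      · rw [(ex_fw α h0 h1 a b).1, (ex_fw α h0 h1 a b).2]
      · rw [(ex_fw α h0 h1 b a).1, (ex_fw α h0 h1 b a).2]
      · have h' : a ≠ b := by simpa using h
        have e1 := ex_swap exV (Sum.elim (fun _ => α) (fun _ => 1 - 2 * α / 3)) _ _ h
          (ex_vw a b h')
        have e2 := ex_swap exV (Sum.elim (fun _ => α) (fun _ => 1 - 2 * α / 3)) _ _ h.symm
          (ex_vw b a h'.symm)
        simp only [Sum.elim_inr] at e1 e2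
        linarith

/-- in the market with two firms of capacity 2, three workers and all
valuations equal to 1, the core is the single point `(0,0;1,1,1)`, the kernel is the
segment `{(α,α;1-2α/3,1-2α/3,1-2α/3) : 0 ≤ α ≤ 3/2}`, and hence the kernel is not
included in the core. -/
theorem example_kernel_not_in_core :
    (∀ z : Fin 2 ⊕ Fin 3 → ℝ,
        inCore (gameValue (fun (_ : Fin 2) (_ : Fin 3) => (1 : ℝ)) (fun _ => 2)) z ↔
          z = Sum.elim (fun _ => (0 : ℝ)) (fun _ => (1 : ℝ))) ∧
    (∀ z : Fin 2 ⊕ Fin 3 → ℝ,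
        inKernel (gameValue (fun (_ : Fin 2) (_ : Fin 3) => (1 : ℝ)) (fun _ => 2)) z ↔
          ∃ α : ℝ, 0 ≤ α ∧ α ≤ 3 / 2 ∧
            z = Sum.elim (fun _ => α) (fun _ => 1 - 2 * α / 3)) ∧
    ¬ (∀ z : Fin 2 ⊕ Fin 3 → ℝ,
        inKernel (gameValue (fun (_ : Fin 2) (_ : Fin 3) => (1 : ℝ)) (fun _ => 2)) z →
          inCore (gameValue (fun (_ : Fin 2) (_ : Fin 3) => (1 : ℝ)) (fun _ => 2)) z) := by
  refine ⟨ex_core, ex_kernel, fun h => ?_⟩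
  have h1 := (ex_core _).mp (h _ ((ex_kernel _).mpr ⟨1, by norm_num, by norm_num, rfl⟩))
  have h2 := congrFun h1 (Sum.inl 0)
  simp at h2

end
end

section
/- Let γ=(F,W,A,r) be a many-to-one assignment market and z a core allocation of v_γ. Then s_{ij}(z)=s_{ji}(z)=0 in each of the following cases: (1) i and j are two distinct firms; (2) i and j are two workers that are assigned to different firms under some optimal matching; (3) i is a firm and j is a worker not assigned to i under some optimal matching. Moreover, for any players i≠j, the maximum defining s_{ij}(z) is attained at an essential coalition. -/
set_option linter.unusedSectionVars false
set_option linter.unusedVariables false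

open Finset
open scoped Classical

noncomputable section

variable {F W : Type*} [Fintype F] [Fintype W]

lemma le_gameValue_aux (A : F → W → ℝ) (r : F → ℕ) (C : Finset (F ⊕ W)) (μ : Finset (F × W))
    (h : IsMatching r univ univ μ) (hC : ∀ p ∈ μ, Sum.inl p.1 ∈ C ∧ Sum.inr p.2 ∈ C) :
    matchValue A μ ≤ gameValue A r C := by
  have hm : ∀ p ∈ μ, p.1 ∈ firmPart C ∧ p.2 ∈ workerPart C := by
    intro p hp
    simpa [firmPart, workerPart] using hC p hp
  unfold gameValue vGamma
  apply Finset.le_sup' (matchValue A)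
  refine Finset.mem_filter.mpr ⟨Finset.mem_powerset.mpr ?_, hm, h.2⟩
  intro p hp
  exact Finset.mem_product.mpr (hm p hp)

lemma isMatching_filter_aux (r : F → ℕ) (μ : Finset (F × W)) (h : IsMatching r univ univ μ)
    (q : F × W → Prop) [DecidablePred q] : IsMatching r univ univ (μ.filter q) := by
  refine ⟨by simp, fun i => ?_, fun j => ?_⟩
  · exact le_trans (Finset.card_le_card
      (Finset.filter_subset_filter _ (Finset.filter_subset _ _))) (h.2.1 i)
  · exact le_trans (Finset.card_le_card
      (Finset.filter_subset_filter _ (Finset.filter_subset _ _))) (h.2.2 j)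

lemma gameValue_univ_le_aux (A : F → W → ℝ) (r : F → ℕ) (μ : Finset (F × W))
    (h : IsOptimalMatching A r μ) : gameValue A r univ ≤ matchValue A μ := by
  unfold gameValue vGamma
  apply Finset.sup'_le
  intro ν hν
  have h1 := (Finset.mem_filter.mp hν).2
  exact h.2 ν ⟨by simp, h1.2⟩

lemma exists_optimal_aux (A : F → W → ℝ) (r : F → ℕ) :
    ∃ μ : Finset (F × W), IsOptimalMatching A r μ := by
  obtain ⟨μ, hμ, hm⟩ := Finset.exists_max_image
    ((univ : Finset (Finset (F × W))).filter fun μ => IsMatching r univ univ μ) (matchValue A)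
    ⟨∅, Finset.mem_filter.mpr ⟨Finset.mem_univ _, empty_isMatching r univ univ⟩⟩
  exact ⟨μ, (Finset.mem_filter.mp hμ).2,
    fun ν hν => hm ν (Finset.mem_filter.mpr ⟨Finset.mem_univ _, hν⟩)⟩

lemma excess_closed_aux (A : F → W → ℝ) (r : F → ℕ) (z : F ⊕ W → ℝ)
    (hz : inCore (gameValue A r) z) (μ : Finset (F × W)) (h : IsOptimalMatching A r μ)
    (C : Finset (F ⊕ W)) (hC : ∀ p ∈ μ, (Sum.inl p.1 ∈ C ↔ Sum.inr p.2 ∈ C)) :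
    excess (gameValue A r) z C = 0 := by
  have h1 := le_gameValue_aux A r C _
    (isMatching_filter_aux r μ h.1 (fun p => Sum.inl p.1 ∈ C)) (by
      intro p hp
      replace hp := Finset.mem_filter.mp hp
      exact ⟨hp.2, (hC p hp.1).1 hp.2⟩)
  have h2 := le_gameValue_aux A r Cᶜ _
    (isMatching_filter_aux r μ h.1 (fun p => ¬ Sum.inl p.1 ∈ C)) (by
      intro p hp
      replace hp := Finset.mem_filter.mp hp
      exact ⟨Finset.mem_compl.mpr hp.2,
        Finset.mem_compl.mpr (fun hh => hp.2 ((hC p hp.1).2 hh))⟩)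
  have h3 : matchValue A (μ.filter fun p => Sum.inl p.1 ∈ C)
      + matchValue A (μ.filter fun p => ¬ Sum.inl p.1 ∈ C) = matchValue A μ :=
    Finset.sum_filter_add_sum_filter_not μ _ _
  have h4 := gameValue_univ_le_aux A r μ h
  have h5 := Finset.sum_add_sum_compl C z
  have h6 := hz.1
  have h7 := hz.2 C
  have h8 := hz.2 Cᶜ
  unfold excess
  linarith

lemma maxSurplus_isGreatest_aux {N : Type*} [Fintype N] (v : Finset N → ℝ) (z : N → ℝ)
    (i j : N) (S : Finset N) (hi : i ∈ S) (hj : j ∉ S)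
    (h : ∀ T : Finset N, i ∈ T → j ∉ T → excess v z T ≤ excess v z S) :
    maxSurplus v z i j = excess v z S := by
  apply IsGreatest.csSup_eq
  refine ⟨⟨S, hi, hj, rfl⟩, ?_⟩
  rintro e ⟨T, h1, h2, rfl⟩
  exact h T h1 h2

lemma excess_nonpos_aux {N : Type*} [Fintype N] (v : Finset N → ℝ) (z : N → ℝ)
    (hz : inCore v z) (S : Finset N) : excess v z S ≤ 0 :=
  sub_nonpos.mpr (hz.2 S)

lemma maxSurplus_zero_aux {N : Type*} [Fintype N] (v : Finset N → ℝ) (z : N → ℝ)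
    (hz : inCore v z) (i j : N) (S : Finset N) (hi : i ∈ S) (hj : j ∉ S)
    (h : excess v z S = 0) : maxSurplus v z i j = 0 := by
  rw [maxSurplus_isGreatest_aux v z i j S hi hj, h]
  intro T _ _
  rw [h]
  exact excess_nonpos_aux v z hz T

lemma essential_aux {N : Type*} [Fintype N] (v : Finset N → ℝ) (z : N → ℝ)
    (hz : inCore v z) (i j : N) (hij : i ≠ j) :
    ∃ S : Finset N, i ∈ S ∧ j ∉ S ∧ excess v z S = maxSurplus v z i j ∧ Essential v S := by
  obtain ⟨S0, hS0, hm0⟩ := Finset.exists_max_image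
    ((univ : Finset (Finset N)).filter fun S => i ∈ S ∧ j ∉ S) (excess v z)
    ⟨{i}, by simp [hij.symm]⟩
  have hS0 := (Finset.mem_filter.mp hS0).2
  have hmax : ∀ T : Finset N, i ∈ T → j ∉ T → excess v z T ≤ excess v z S0 :=
    fun T h1 h2 => hm0 T (Finset.mem_filter.mpr ⟨Finset.mem_univ _, h1, h2⟩)
  obtain ⟨S, hS, hmin⟩ := Finset.exists_min_image
    ((univ : Finset (Finset N)).filter
      fun S => i ∈ S ∧ j ∉ S ∧ excess v z S0 ≤ excess v z S) Finset.card
    ⟨S0, Finset.mem_filter.mpr ⟨Finset.mem_univ _, hS0.1, hS0.2, le_rfl⟩⟩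
  obtain ⟨hiS, hjS, hge⟩ := (Finset.mem_filter.mp hS).2
  have key : ∀ P Q : Finset N, Q.Nonempty → Disjoint P Q → P ∪ Q = S → v S ≤ v P + v Q →
      i ∈ P → False := by
    intro P Q hQ hd hu hv hiP
    have hsum : ∑ k ∈ S, z k = ∑ k ∈ P, z k + ∑ k ∈ Q, z k := by
      rw [← hu, Finset.sum_union hd]
    have hq := hz.2 Q
    have hcard : S.card = P.card + Q.card := by
      rw [← hu, Finset.card_union_of_disjoint hd]
    have hjP : j ∉ P := fun hh => hjS (hu ▸ Finset.mem_union_left _ hh)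
    have hle : excess v z S0 ≤ excess v z P := by
      unfold excess at *
      linarith
    have := hmin P (Finset.mem_filter.mpr ⟨Finset.mem_univ _, hiP, hjP, hle⟩)
    have := hQ.card_pos
    omega
  refine ⟨S, hiS, hjS, ?_, ⟨i, hiS⟩, ?_⟩
  · rw [maxSurplus_isGreatest_aux v z i j S hiS hjS]
    exact fun T h1 h2 => (hmax T h1 h2).trans hge
  · rintro ⟨P, Q, hP, hQ, hd, hu, hv⟩
    have hi' : i ∈ P ∪ Q := hu ▸ hiS
    rcases Finset.mem_union.mp hi' with h | h
    · exact key P Q hQ hd hu hv h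
    · exact key Q P hP hd.symm (by rw [Finset.union_comm]; exact hu) (by linarith) h

lemma worker_unique_aux (r : F → ℕ) (μ : Finset (F × W)) (h : IsMatching r univ univ μ)
    (f g : F) (j : W) (hf : (f, j) ∈ μ) (hg : (g, j) ∈ μ) : f = g := by
  have h1 := Finset.card_le_one.mp (h.2.2 j) (f, j) (by simp [hf]) (g, j) (by simp [hg])
  exact congrArg Prod.fst h1

/-- firm `i` together with its workers -/
def blockAux (μ : Finset (F × W)) (i : F) : Finset (F ⊕ W) :=
  univ.filter fun x => x = Sum.inl i ∨ ∃ j, (i, j) ∈ μ ∧ x = Sum.inr j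

lemma inl_mem_blockAux (μ : Finset (F × W)) (i f : F) :
    (Sum.inl f : F ⊕ W) ∈ blockAux μ i ↔ f = i := by
  simp [blockAux]

lemma inr_mem_blockAux (μ : Finset (F × W)) (i : F) (j : W) :
    (Sum.inr j : F ⊕ W) ∈ blockAux μ i ↔ (i, j) ∈ μ := by
  simp [blockAux]

lemma excess_blockAux (A : F → W → ℝ) (r : F → ℕ) (z : F ⊕ W → ℝ)
    (hz : inCore (gameValue A r) z) (μ : Finset (F × W)) (h : IsOptimalMatching A r μ)
    (i : F) : excess (gameValue A r) z (blockAux μ i) = 0 := by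
  apply excess_closed_aux A r z hz μ h
  rintro ⟨f, j⟩ hp
  rw [inl_mem_blockAux, inr_mem_blockAux]
  constructor
  · rintro rfl
    exact hp
  · intro h2
    exact worker_unique_aux r μ h.1 _ _ j hp h2

/-- at any core allocation the maximum surpluses vanish for the listed
pairs, and for any pair of players the maximum surplus is attained at an essential
coalition. -/
theorem maxSurplus_at_core (A : F → W → ℝ) (r : F → ℕ)
    (hA : ∀ i j, 0 ≤ A i j)
    (z : F ⊕ W → ℝ) (hz : inCore (gameValue A r) z) :
    (∀ i1 i2 : F, i1 ≠ i2 →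
        maxSurplus (gameValue A r) z (Sum.inl i1) (Sum.inl i2) = 0 ∧
        maxSurplus (gameValue A r) z (Sum.inl i2) (Sum.inl i1) = 0) ∧
    (∀ j k : W,
        (∃ μ, IsOptimalMatching A r μ ∧
          ∃ f1 f2 : F, f1 ≠ f2 ∧ (f1, j) ∈ μ ∧ (f2, k) ∈ μ) →
        maxSurplus (gameValue A r) z (Sum.inr j) (Sum.inr k) = 0 ∧
        maxSurplus (gameValue A r) z (Sum.inr k) (Sum.inr j) = 0) ∧
    (∀ (i : F) (j : W),
        (∃ μ, IsOptimalMatching A r μ ∧ (i, j) ∉ μ) →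
        maxSurplus (gameValue A r) z (Sum.inl i) (Sum.inr j) = 0 ∧
        maxSurplus (gameValue A r) z (Sum.inr j) (Sum.inl i) = 0) ∧
    (∀ i j : F ⊕ W, i ≠ j → ∃ S : Finset (F ⊕ W), i ∈ S ∧ j ∉ S ∧
        excess (gameValue A r) z S = maxSurplus (gameValue A r) z i j ∧
        Essential (gameValue A r) S) := by
  have firms : ∀ i1 i2 : F, i1 ≠ i2 →
      maxSurplus (gameValue A r) z (Sum.inl i1) (Sum.inl i2) = 0 := by
    intro i1 i2 hne
    obtain ⟨μ, hμ⟩ := exists_optimal_aux A r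
    refine maxSurplus_zero_aux _ z hz _ _ (blockAux μ i1) ?_ ?_ (excess_blockAux A r z hz μ hμ i1)
    · rw [inl_mem_blockAux]
    · rw [inl_mem_blockAux]
      exact hne.symm
  have workers : ∀ (μ : Finset (F × W)) (j k : W) (f1 f2 : F), IsOptimalMatching A r μ →
      f1 ≠ f2 → (f1, j) ∈ μ → (f2, k) ∈ μ →
      maxSurplus (gameValue A r) z (Sum.inr j) (Sum.inr k) = 0 := by
    intro μ j k f1 f2 hμ hne hj hk
    refine maxSurplus_zero_aux _ z hz _ _ (blockAux μ f1) ?_ ?_ (excess_blockAux A r z hz μ hμ f1)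
    · rw [inr_mem_blockAux]
      exact hj
    · rw [inr_mem_blockAux]
      exact fun hh => hne (worker_unique_aux r μ hμ.1 _ _ k hh hk)
  refine ⟨fun i1 i2 h => ⟨firms i1 i2 h, firms i2 i1 h.symm⟩, ?_, ?_,
    fun i j hij => essential_aux _ z hz i j hij⟩
  · rintro j k ⟨μ, hμ, f1, f2, hne, hj, hk⟩
    exact ⟨workers μ j k f1 f2 hμ hne hj hk, workers μ k j f2 f1 hμ hne.symm hk hj⟩
  · rintro i j ⟨μ, hμ, hij⟩
    constructor
    · refine maxSurplus_zero_aux _ z hz _ _ (blockAux μ i) ?_ ?_ (excess_blockAux A r z hz μ hμ i)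
      · rw [inl_mem_blockAux]
      · rw [inr_mem_blockAux]
        exact hij
    · by_cases hex : ∃ f, (f, j) ∈ μ
      · obtain ⟨f, hf⟩ := hex
        refine maxSurplus_zero_aux _ z hz _ _ (blockAux μ f) ?_ ?_
          (excess_blockAux A r z hz μ hμ f)
        · rw [inr_mem_blockAux]
          exact hf
        · rw [inl_mem_blockAux]
          rintro rfl
          exact hij hf
      · refine maxSurplus_zero_aux _ z hz _ _ {Sum.inr j} (by simp) (by simp)
          (excess_closed_aux A r z hz μ hμ _ ?_)
        rintro ⟨f, k⟩ hp
        have : k ≠ j := by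
          rintro rfl
          exact hex ⟨f, hp⟩
        simp [this]

end
end

section
/- Let γ=(F,W,A,r) be a capacity-balanced many-to-one assignment market with optimal matching μ. Then (x,y)∈ℝ^F×ℝ^W belongs to the core C(v_γ) if and only if (μ,y) is a competitive equilibrium of the market and x_i = Σ_{j∈μ(i)}(a_{ij}−y_j) for all i∈F. In particular, the projection of the core to the workers' coordinates equals the set of competitive salary vectors. -/
set_option linter.unusedSectionVars false
set_option linter.unusedVariables false

open Finset
open scoped Classical

noncomputable section

variable {F W : Type*} [Fintype F] [Fintype W]

/-- `(m, y)` is a competitive equilibrium of the capacity-balanced market: salaries are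
nonnegative and each firm's assigned set of workers maximizes its net profit among all
sets of workers within its capacity (no worker is unmatched under `m`). -/
def IsCompEqBal (A : F → W → ℝ) (r : F → ℕ) (m : W → F) (y : W → ℝ) : Prop :=
  (∀ j : W, 0 ≤ y j) ∧
  ∀ (i : F) (S : Finset W), S.card ≤ r i →
    ∑ j ∈ S, (A i j - y j) ≤ ∑ j ∈ assignedTo m i, (A i j - y j)

lemma le_vGamma (A : F → W → ℝ) (r : F → ℕ) (S : Finset F) (T : Finset W)
    (μ : Finset (F × W)) (h : IsMatching r S T μ) : matchValue A μ ≤ vGamma A r S T := by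
  unfold vGamma
  apply Finset.le_sup' (matchValue A)
  rw [Finset.mem_filter, Finset.mem_powerset]
  exact ⟨fun p hp => Finset.mem_product.mpr (h.1 p hp), h⟩

lemma vGamma_le (A : F → W → ℝ) (r : F → ℕ) (S : Finset F) (T : Finset W) (b : ℝ)
    (h : ∀ μ, IsMatching r S T μ → matchValue A μ ≤ b) : vGamma A r S T ≤ b := by
  unfold vGamma
  apply Finset.sup'_le
  intro μ hμ
  exact h μ (Finset.mem_filter.mp hμ).2

lemma sum_assigned (m : W → F) (f : F → W → ℝ) :
    ∑ i, ∑ j ∈ assignedTo m i, f i j = ∑ j, f (m j) j := by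
  rw [← Finset.sum_fiberwise univ m (fun j => f (m j) j)]
  refine Finset.sum_congr rfl fun i _ => ?_
  refine Finset.sum_congr rfl fun j hj => ?_
  rw [(Finset.mem_filter.mp hj).2]

lemma matchValue_fn (A : F → W → ℝ) (m : W → F) :
    matchValue A (matchingOfFn m) = ∑ j, A (m j) j := by
  unfold matchValue matchingOfFn
  rw [Finset.sum_image]
  intro a _ b _ hab
  exact (Prod.mk.inj hab).2

lemma gameValue_univ (A : F → W → ℝ) (r : F → ℕ) (m : W → F) (hm : IsBalancedOptimal A r m) :
    gameValue A r univ = ∑ j, A (m j) j := by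
  have h1 : firmPart (univ : Finset (F ⊕ W)) = univ := by simp [firmPart]
  have h2 : workerPart (univ : Finset (F ⊕ W)) = univ := by simp [workerPart]
  unfold gameValue
  rw [h1, h2, ← matchValue_fn]
  exact le_antisymm (vGamma_le _ _ _ _ _ hm.2.2) (le_vGamma _ _ _ _ _ hm.2.1)

lemma sum_coalition (x : F → ℝ) (y : W → ℝ) (C : Finset (F ⊕ W)) :
    ∑ k ∈ C, Sum.elim x y k = ∑ i ∈ firmPart C, x i + ∑ j ∈ workerPart C, y j := by
  have : C = (firmPart C).disjSum (workerPart C) := by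
    ext k
    cases k <;> simp [firmPart, workerPart]
  conv_lhs => rw [this]
  rw [Finset.sum_disjSum]
  simp

lemma parts_disjSum (S : Finset F) (T : Finset W) :
    firmPart (S.disjSum T) = S ∧ workerPart (S.disjSum T) = T := by
  constructor <;> ext k <;> simp [firmPart, workerPart]

lemma core_fwd (A : F → W → ℝ) (r : F → ℕ) (m : W → F) (hm : IsBalancedOptimal A r m)
    (x : F → ℝ) (y : W → ℝ) (h : inCore (gameValue A r) (Sum.elim x y)) :
    IsCompEqBal A r m y ∧ ∀ i : F, x i = ∑ j ∈ assignedTo m i, (A i j - y j) := by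
  obtain ⟨h1, h2⟩ := h
  have key : ∀ (S : Finset F) (T : Finset W) (μ : Finset (F × W)), IsMatching r S T μ →
      matchValue A μ ≤ ∑ i ∈ S, x i + ∑ j ∈ T, y j := by
    intro S T μ hμ
    have := h2 (S.disjSum T)
    rw [sum_coalition, gameValue, (parts_disjSum S T).1, (parts_disjSum S T).2] at this
    exact (le_vGamma _ _ _ _ _ hμ).trans this
  have hy : ∀ j, 0 ≤ y j := by
    intro j
    have := key ∅ {j} ∅ (empty_isMatching _ _ _)
    simpa [matchValue] using this
  have hS : ∀ (i : F) (S : Finset W), S.card ≤ r i → ∑ j ∈ S, (A i j - y j) ≤ x i := by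
    intro i S hc
    have := key {i} S (({i} : Finset F) ×ˢ S) (by
      refine ⟨fun p hp => Finset.mem_product.mp hp, ?_, ?_⟩
      · intro i'
        by_cases hi : i' = i
        · subst hi
          refine (Finset.card_filter_le _ _).trans ?_
          simpa using hc
        · rw [Finset.filter_false_of_mem]
          · simp
          · intro p hp hp'
            have := (Finset.mem_product.mp hp).1
            rw [Finset.mem_singleton] at this
            exact hi (hp'.symm.trans this)
      · intro j
        rw [Finset.card_le_one]
        intro a ha b hb
        simp only [Finset.mem_filter, Finset.mem_product, Finset.mem_singleton] at ha hb
        exact Prod.ext (ha.1.1.trans hb.1.1.symm) (ha.2.trans hb.2.symm))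
    rw [matchValue, Finset.sum_product] at this
    simp only [Finset.sum_singleton] at this
    rw [Finset.sum_sub_distrib]
    linarith
  have hle : ∀ i ∈ (univ : Finset F), ∑ j ∈ assignedTo m i, (A i j - y j) ≤ x i :=
    fun i _ => hS i _ (hm.1 i).le
  have hsum : ∑ i, ∑ j ∈ assignedTo m i, (A i j - y j) = ∑ i, x i := by
    rw [sum_assigned m (fun i j => A i j - y j), Finset.sum_sub_distrib]
    rw [gameValue_univ A r m hm, Fintype.sum_sum_type] at h1
    simp only [Sum.elim_inl, Sum.elim_inr] at h1
    linarith
  have heq := (Finset.sum_eq_sum_iff_of_le hle).mp hsum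
  refine ⟨⟨hy, fun i S hc => ?_⟩, fun i => (heq i (mem_univ i)).symm⟩
  rw [heq i (mem_univ i)]
  exact hS i S hc

lemma core_bwd (A : F → W → ℝ) (r : F → ℕ) (m : W → F) (hm : IsBalancedOptimal A r m)
    (x : F → ℝ) (y : W → ℝ) (h : IsCompEqBal A r m y)
    (hx : ∀ i : F, x i = ∑ j ∈ assignedTo m i, (A i j - y j)) :
    inCore (gameValue A r) (Sum.elim x y) := by
  obtain ⟨hy, hS⟩ := h
  constructor
  · rw [gameValue_univ A r m hm, Fintype.sum_sum_type]
    simp only [Sum.elim_inl, Sum.elim_inr]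
    simp_rw [hx]
    rw [sum_assigned m (fun i j => A i j - y j), Finset.sum_sub_distrib]
    linarith
  · intro C
    rw [sum_coalition, gameValue]
    apply vGamma_le
    intro μ hμ
    have inj : ∀ p ∈ μ, ∀ q ∈ μ, p.2 = q.2 → p = q := by
      intro p hp q hq hpq
      exact Finset.card_le_one.mp (hμ.2.2 q.2) p (Finset.mem_filter.mpr ⟨hp, hpq⟩) q
        (Finset.mem_filter.mpr ⟨hq, rfl⟩)
    have hA1 : ∑ p ∈ μ, (A p.1 p.2 - y p.2) ≤ ∑ i ∈ firmPart C, x i := by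
      rw [← Finset.sum_fiberwise_of_maps_to (fun p hp => (hμ.1 p hp).1)]
      refine Finset.sum_le_sum fun i _ => ?_
      have hi : ∑ p ∈ μ.filter (fun p => p.1 = i), (A p.1 p.2 - y p.2)
          = ∑ j ∈ (μ.filter (fun p => p.1 = i)).image Prod.snd, (A i j - y j) := by
        rw [Finset.sum_image]
        · refine Finset.sum_congr rfl fun p hp => ?_
          rw [(Finset.mem_filter.mp hp).2]
        · intro p hp q hq hpq
          exact inj p (Finset.mem_filter.mp hp).1 q (Finset.mem_filter.mp hq).1 hpq
      rw [hi, hx]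
      exact hS i _ (Finset.card_image_le.trans (hμ.2.1 i))
    have hB : ∑ p ∈ μ, y p.2 ≤ ∑ j ∈ workerPart C, y j := by
      rw [← Finset.sum_image (f := y) (g := Prod.snd) (s := μ)
        (fun p hp q hq hpq => inj p hp q hq hpq)]
      apply Finset.sum_le_sum_of_subset_of_nonneg
      · intro j hj
        obtain ⟨p, hp, rfl⟩ := Finset.mem_image.mp hj
        exact (hμ.1 p hp).2
      · exact fun j _ _ => hy j
    rw [Finset.sum_sub_distrib] at hA1
    unfold matchValue
    linarith

/-- `(x,y)` is in the core iff `(m,y)` is a competitive equilibrium and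
each firm receives its net profit; in particular, the projection of the core to the
workers' coordinates is the set of competitive salary vectors. -/
theorem core_iff_competitive (A : F → W → ℝ) (r : F → ℕ)
    (hA : ∀ i j, 0 ≤ A i j) (hbal : ∑ i, r i = Fintype.card W)
    (m : W → F) (hm : IsBalancedOptimal A r m) :
    (∀ (x : F → ℝ) (y : W → ℝ),
        inCore (gameValue A r) (Sum.elim x y) ↔
          (IsCompEqBal A r m y ∧
            ∀ i : F, x i = ∑ j ∈ assignedTo m i, (A i j - y j))) ∧
    (∀ y : W → ℝ,
        (∃ x : F → ℝ, inCore (gameValue A r) (Sum.elim x y)) ↔ IsCompEqBal A r m y) := by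
  refine ⟨fun x y => ⟨core_fwd A r m hm x y, fun h => core_bwd A r m hm x y h.1 h.2⟩,
    fun y => ⟨?_, fun h => ⟨_, core_bwd A r m hm _ y h fun i => rfl⟩⟩⟩
  rintro ⟨x, h⟩
  exact (core_fwd A r m hm x y h).1

end
end

section
/- Let γ=(F,W,A,r) be a capacity-balanced many-to-one assignment market with optimal matching μ. A vector y∈C(W) is an extreme point of C(W) if and only if the base-graph of the associated tight digraph (W_0, E^y) is connected. -/
set_option linter.unusedSectionVars false
set_option linter.unusedVariables false

open Finset
open scoped Classical

noncomputable section

variable {F W : Type*} [Fintype F] [Fintype W]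

lemma aux_tight {a b p u v : ℝ} (ha : 0 < a) (hb : 0 < b) (hab : a + b = 1)
    (hu : p ≤ u) (hv : p ≤ v) (h : a * u + b * v = p) : u = p := by
  by_contra hne
  have h1 : p < u := lt_of_le_of_ne hu (Ne.symm hne)
  have h2 := mul_lt_mul_of_pos_left h1 ha
  have h3 := mul_le_mul_of_nonneg_left hv hb.le
  have h4 : a * p + b * p = p := by rw [← add_mul, hab, one_mul]
  linarith

lemma aux_lin {c s t : ℝ} (h : c ≤ s) (h' : t ≠ 0 → c < s) :
    ∀ᶠ e : ℝ in nhds 0, c ≤ s + e * t := by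
  by_cases ht : t = 0
  · simp [ht, h]
  · have hc : Filter.Tendsto (fun e : ℝ => s + e * t) (nhds 0) (nhds (s + 0 * t)) :=
      (by fun_prop : Continuous fun e : ℝ => s + e * t).tendsto 0
    have := hc.eventually (lt_mem_nhds (by simpa using h' ht : c < s + 0 * t))
    exact this.mono fun _ h => h.le

lemma aux_feasible (A : F → W → ℝ) (m : W → F) (y d : W → ℝ) (hy : y ∈ CW A m)
    (h0 : ∀ j, y j = 0 → d j = 0) (h1 : ∀ j, y j = A (m j) j → d j = 0)
    (h2 : ∀ j k, m j ≠ m k → y k - y j = A (m j) k - A (m j) j → d k = d j) :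
    ∀ᶠ e : ℝ in nhds 0, (fun j => y j + e * d j) ∈ CW A m := by
  have e0 : ∀ᶠ e : ℝ in nhds 0, ∀ j, 0 ≤ y j + e * d j :=
    Filter.eventually_all.2 fun j => aux_lin (hy.1 j).1 fun hd =>
      lt_of_le_of_ne (hy.1 j).1 fun h => hd (h0 j h.symm)
  have e1 : ∀ᶠ e : ℝ in nhds 0, ∀ j, - A (m j) j ≤ - y j + e * (- d j) :=
    Filter.eventually_all.2 fun j => aux_lin (by linarith [(hy.1 j).2]) fun hd =>
      lt_of_le_of_ne (by linarith [(hy.1 j).2]) fun h => hd (by rw [h1 j (by linarith), neg_zero])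
  have e2 : ∀ᶠ e : ℝ in nhds 0, ∀ j k, m j ≠ m k →
      A (m j) k - A (m j) j ≤ (y k - y j) + e * (d k - d j) := by
    refine Filter.eventually_all.2 fun j => Filter.eventually_all.2 fun k => ?_
    by_cases hjk : m j = m k
    · simp [hjk]
    · refine (aux_lin (hy.2 j k hjk) fun hd => ?_).mono fun e h _ => h
      exact lt_of_le_of_ne (hy.2 j k hjk) fun h => hd (by rw [h2 j k hjk h.symm, sub_self])
  filter_upwards [e0, e1, e2] with e a0 a1 a2
  refine ⟨fun j => ⟨a0 j, ?_⟩, fun j k hjk => ?_⟩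
  · have := a1 j
    dsimp only
    linarith
  · have := a2 j k hjk
    dsimp only
    linarith

/-- a competitive salary vector is an extreme point of `C(W)` iff the
base-graph of its tight digraph is connected. -/
theorem extreme_iff_baseGraph_connected (A : F → W → ℝ) (r : F → ℕ)
    (hA : ∀ i j, 0 ≤ A i j) (hbal : ∑ i, r i = Fintype.card W)
    (m : W → F) (hm : IsBalancedOptimal A r m)
    (y : W → ℝ) (hy : y ∈ CW A m) :
    y ∈ Set.extremePoints ℝ (CW A m) ↔
      ∀ u v : Option W,
        Relation.ReflTransGen (fun a b => tightArc A m y a b ∨ tightArc A m y b a) u v := by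
  constructor
  · intro hext
    set R := fun a b => tightArc A m y a b ∨ tightArc A m y b a with hR
    have hsym : ∀ a b, Relation.ReflTransGen R a b → Relation.ReflTransGen R b a := by
      intro a b h
      induction h with
      | refl => exact .refl
      | tail _ h ih => exact Relation.ReflTransGen.head h.symm ih
    suffices hall : ∀ j, Relation.ReflTransGen R none (some j) by
      have hall' : ∀ v, Relation.ReflTransGen R none v := by
        intro v
        cases v with
        | none => exact .refl
        | some j => exact hall j
      exact fun u v => (hsym _ _ (hall' u)).trans (hall' v)
    intro j₀
    by_contra hj₀
    let d : W → ℝ := fun j => if Relation.ReflTransGen R none (some j) then 0 else 1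
    have hf := aux_feasible A m y d hy
      (fun j hj => if_pos (Relation.ReflTransGen.single (show R none (some j) from Or.inl hj)))
      (fun j hj => if_pos (Relation.ReflTransGen.single (show R none (some j) from Or.inr hj)))
      (fun j k hjk h => by
        have hE : R (some j) (some k) := Or.inl ⟨hjk, h⟩
        have : Relation.ReflTransGen R none (some k) ↔ Relation.ReflTransGen R none (some j) :=
          ⟨fun h => h.tail hE.symm, fun h => h.tail hE⟩
        simp only [d, this])
    obtain ⟨ε, hε, hb⟩ := Metric.eventually_nhds_iff.1 hf
    have p1 := hb (y := ε / 2) (by rw [Real.dist_eq, sub_zero, abs_of_pos] <;> linarith)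
    have p2 := hb (y := -(ε / 2)) (by
      rw [Real.dist_eq, sub_zero, abs_neg, abs_of_pos] <;> linarith)
    have := hext.2 p1 p2 ⟨1/2, 1/2, by norm_num, by norm_num, by norm_num, by
      ext j
      simp only [Pi.add_apply, Pi.smul_apply, smul_eq_mul]
      ring⟩
    have h := congrFun this j₀
    simp only [d, if_neg hj₀] at h
    linarith
  · intro hc
    refine ⟨hy, fun x₁ h₁ x₂ h₂ hseg => ?_⟩
    obtain ⟨a, b, ha, hb, hab, hxy⟩ := hseg
    have hx : ∀ j, a * x₁ j + b * x₂ j = y j := fun j => by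
      simpa using congrFun hxy j
    let D : Option W → ℝ := fun o => o.elim 0 fun j => x₁ j - y j
    have harc : ∀ u v, tightArc A m y u v → D u = D v := by
      intro u v h
      match u, v, h with
      | none, some k, h =>
        have h : y k = 0 := h
        have := aux_tight ha hb hab (h₁.1 k).1 (h₂.1 k).1 ((hx k).trans h)
        simp [D, this, h]
      | some j, none, h =>
        have h : y j = A (m j) j := h
        have := aux_tight (p := - A (m j) j) (u := - x₁ j) (v := - x₂ j) ha hb hab
          (by linarith [(h₁.1 j).2]) (by linarith [(h₂.1 j).2]) (by linarith [hx j])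
        simp only [D, Option.elim]
        linarith
      | some j, some k, h =>
        have h : m j ≠ m k ∧ y k - y j = A (m j) k - A (m j) j := h
        have := aux_tight ha hb hab (h₁.2 j k h.1) (h₂.2 j k h.1)
          (by linarith [hx j, hx k, h.2])
        simp only [D, Option.elim]
        linarith [h.2]
    ext j
    have hD : ∀ v, Relation.ReflTransGen
        (fun a b => tightArc A m y a b ∨ tightArc A m y b a) none v → D none = D v := by
      intro v h
      induction h with
      | refl => rfl
      | tail _ h ih => exact ih.trans (h.elim (harc _ _) fun h => (harc _ _ h).symm)
    have := hD _ (hc none (some j))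
    simp only [D, Option.elim] at this
    linarith

end
end

section
/- Let γ=(F,W,A,r) be a capacity-balanced many-to-one assignment market with optimal matching μ. A vector y∈C(W) is the coordinatewise minimum element of C(W) (the minimum competitive salary vector) if and only if its tight digraph (W_0, E^y) contains a directed spanning tree rooted at node 0 with all arcs directed away from node 0. -/
set_option linter.unusedSectionVars false
set_option linter.unusedVariables false

open Finset
open scoped Classical

noncomputable section

variable {F W : Type*} [Fintype F] [Fintype W]

/-- `y` is the coordinatewise minimum element of `C(W)` iff its tight
digraph contains a `0`-sourced directed spanning tree, i.e. every node is reachable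
from node `0` by a directed path of tight arcs. -/
theorem min_salary_iff_zero_sourced (A : F → W → ℝ) (r : F → ℕ)
    (hA : ∀ i j, 0 ≤ A i j) (hbal : ∑ i, r i = Fintype.card W)
    (m : W → F) (hm : IsBalancedOptimal A r m)
    (y : W → ℝ) (hy : y ∈ CW A m) :
    (∀ y' ∈ CW A m, ∀ j : W, y j ≤ y' j) ↔
      ∀ u : Option W, Relation.ReflTransGen (tightArc A m y) none u := by
  constructor
  · intro hmin
    by_contra hne
    push Not at hne
    obtain ⟨u, hu⟩ := hne
    obtain ⟨h1, h2⟩ := hy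
    set R : Option W → Prop := fun u => Relation.ReflTransGen (tightArc A m y) none u with hR
    have hR0 : R none := Relation.ReflTransGen.refl
    have hpos : ∀ j, ¬ R (some j) → 0 < y j := by
      intro j hj
      refine lt_of_le_of_ne (h1 j).1 fun h => hj ?_
      exact Relation.ReflTransGen.tail hR0 (show y j = 0 from h.symm)
    have hlt : ∀ j k, R (some j) → ¬ R (some k) → m j ≠ m k →
        A (m j) k - A (m j) j < y k - y j := by
      intro j k hj hk hjk
      refine lt_of_le_of_ne (h2 j k hjk) fun h => hk ?_
      exact Relation.ReflTransGen.tail hj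
        (show m j ≠ m k ∧ y k - y j = A (m j) k - A (m j) j from ⟨hjk, h.symm⟩)
    have e0 : ∀ c : ℝ, 0 < c → ∀ᶠ ε in nhdsWithin (0:ℝ) (Set.Ioi 0), ε < c := fun c hc =>
      Filter.Eventually.filter_mono nhdsWithin_le_nhds (eventually_lt_nhds hc)
    have e1 : ∀ᶠ ε in nhdsWithin (0:ℝ) (Set.Ioi 0), ∀ j, ¬ R (some j) → ε < y j := by
      rw [Filter.eventually_all]
      intro j
      by_cases hj : R (some j)
      · exact Filter.Eventually.of_forall fun _ h => absurd hj h
      · exact (e0 _ (hpos j hj)).mono fun _ h _ => h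
    have e2 : ∀ᶠ ε in nhdsWithin (0:ℝ) (Set.Ioi 0), ∀ j k, R (some j) → ¬ R (some k) →
        m j ≠ m k → ε < y k - y j - (A (m j) k - A (m j) j) := by
      rw [Filter.eventually_all]
      intro j
      rw [Filter.eventually_all]
      intro k
      by_cases h : R (some j) ∧ ¬ R (some k) ∧ m j ≠ m k
      · exact (e0 _ (sub_pos.2 (hlt j k h.1 h.2.1 h.2.2))).mono fun _ h _ _ _ => h
      · exact Filter.Eventually.of_forall fun _ a b c => absurd ⟨a, b, c⟩ h
    obtain ⟨ε, ⟨he1, he2⟩, he⟩ := ((e1.and e2).and self_mem_nhdsWithin).exists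
    have he : 0 < ε := he
    cases u with
    | none => exact hu hR0
    | some w =>
      have hu : ¬ R (some w) := hu
      have := hmin (fun j => if R (some j) then y j else y j - ε) ?_ w
      · simp only [hu, if_false] at this
        linarith
      · refine ⟨fun j => ?_, fun j k hjk => ?_⟩
        · have := h1 j
          by_cases hj : R (some j)
          · simpa only [hj, if_true] using this
          · have := he1 j hj
            simp only [hj, if_false]
            constructor <;> linarith
        · have := h2 j k hjk
          by_cases hj : R (some j) <;> by_cases hk : R (some k) <;>
            simp only [hj, hk, if_true, if_false]
          · exact this
          · have := he2 j k hj hk hjk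
            linarith
          · linarith
          · linarith
  · intro h y' hy' j
    have key : ∀ u, Relation.ReflTransGen (tightArc A m y) none u →
        ∀ j, u = some j → y j ≤ y' j := by
      intro u hu
      induction hu with
      | refl => intro j hj; cases hj
      | @tail b c _ hbc ih =>
        rintro k rfl
        cases b with
        | none =>
          have : y k = 0 := hbc
          rw [this]; exact (hy'.1 k).1
        | some j =>
          have hbc : m j ≠ m k ∧ y k - y j = A (m j) k - A (m j) j := hbc
          have := ih j rfl
          have := hy'.2 j k hbc.1
          linarith [hbc.2]
    exact key _ (h _) j rfl

end
end

section
/- Let γ=(F,W,A,r) be a capacity-balanced many-to-one assignment market with optimal matching μ. A vector y∈C(W) is the coordinatewise maximum element of C(W) (the maximum competitive salary vector) if and only if its tight digraph (W_0, E^y) contains a directed spanning tree rooted at node 0 with all arcs directed towards node 0. -/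
set_option linter.unusedSectionVars false
set_option linter.unusedVariables false

open Finset
open scoped Classical

noncomputable section

variable {F W : Type*} [Fintype F] [Fintype W]

/-- `y` is the coordinatewise maximum element of `C(W)` iff its tight
digraph contains a `0`-sinked directed spanning tree, i.e. node `0` is reachable from
every node by a directed path of tight arcs. -/
theorem max_salary_iff_zero_sinked (A : F → W → ℝ) (r : F → ℕ)
    (hA : ∀ i j, 0 ≤ A i j) (hbal : ∑ i, r i = Fintype.card W)
    (m : W → F) (hm : IsBalancedOptimal A r m)
    (y : W → ℝ) (hy : y ∈ CW A m) :
    (∀ y' ∈ CW A m, ∀ j : W, y' j ≤ y j) ↔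
      ∀ u : Option W, Relation.ReflTransGen (tightArc A m y) u none := by
  obtain ⟨hy1, hy2⟩ := hy
  constructor
  · intro hmax
    by_contra hcon
    push Not at hcon
    obtain ⟨u, hu⟩ := hcon
    set R : Option W → Prop := fun u => Relation.ReflTransGen (tightArc A m y) u none with hR
    have hstep : ∀ a b, tightArc A m y a b → R b → R a := fun a b h1 h2 =>
      Relation.ReflTransGen.head h1 h2
    have hnone : R none := Relation.ReflTransGen.refl
    have hε : ∃ ε : ℝ, 0 < ε ∧ (∀ j, ¬ R (some j) → ε ≤ A (m j) j - y j) ∧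
        (∀ j k, m j ≠ m k → ¬ R (some j) → R (some k) →
          ε ≤ y k - y j - (A (m j) k - A (m j) j)) := by
      have key : ∀ c : ℝ, 0 < c → ∀ᶠ ε in nhdsWithin (0:ℝ) (Set.Ioi 0), ε ≤ c := by
        intro c hc
        filter_upwards [Ioc_mem_nhdsGT hc] with x hx using hx.2
      have h1 : ∀ᶠ ε in nhdsWithin (0:ℝ) (Set.Ioi 0),
          ∀ j, ¬ R (some j) → ε ≤ A (m j) j - y j := by
        rw [Filter.eventually_all]
        intro j
        by_cases hj : R (some j)
        · simp [hj]
        · have : y j ≠ A (m j) j := fun h => hj (hstep (some j) none h hnone)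
          have h' : 0 < A (m j) j - y j := sub_pos.2 (lt_of_le_of_ne (hy1 j).2 this)
          filter_upwards [key _ h'] with x hx _ using hx
      have h2 : ∀ᶠ ε in nhdsWithin (0:ℝ) (Set.Ioi 0),
          ∀ j k, m j ≠ m k → ¬ R (some j) → R (some k) →
          ε ≤ y k - y j - (A (m j) k - A (m j) j) := by
        rw [Filter.eventually_all]
        intro j
        rw [Filter.eventually_all]
        intro k
        by_cases hjk : m j ≠ m k ∧ ¬ R (some j) ∧ R (some k)
        · obtain ⟨hne, hj, hk⟩ := hjk
          have : A (m j) k - A (m j) j ≠ y k - y j := fun h =>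
            hj (hstep (some j) (some k) ⟨hne, h.symm⟩ hk)
          have h' := sub_pos.2 (lt_of_le_of_ne (hy2 j k hne) this)
          filter_upwards [key _ h'] with x hx _ _ _ using hx
        · exact Filter.Eventually.of_forall fun x a b c => absurd ⟨a, b, c⟩ hjk
      have h0 : ∀ᶠ ε in nhdsWithin (0:ℝ) (Set.Ioi 0), 0 < ε := by
        filter_upwards [self_mem_nhdsWithin] with x hx using hx
      exact (h0.and (h1.and h2)).exists
    obtain ⟨ε, hε0, hε1, hε2⟩ := hε
    have hmem : (fun j => if R (some j) then y j else y j + ε) ∈ CW A m := by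
      refine ⟨fun j => ?_, fun j k hjk => ?_⟩
      · have := hy1 j
        have := hε1 j
        by_cases hj : R (some j)
        · simpa [hj] using hy1 j
        · have h3 := hε1 j hj
          simp only [hj, if_false]
          constructor <;> linarith [(hy1 j).1]
      · have h := hy2 j k hjk
        by_cases hj : R (some j) <;> by_cases hk : R (some k) <;>
          simp only [hj, hk, if_true, if_false]
        · exact h
        · linarith
        · linarith [hε2 j k hjk hj hk]
        · linarith
    cases u with
    | none => exact hu hnone
    | some j =>
      have h := hmax _ hmem j
      have hj : ¬ R (some j) := hu
      simp only [hj, if_false] at h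
      linarith
  · intro hreach y' hy' j
    obtain ⟨h1, h2⟩ := hy'
    have gen : ∀ u, Relation.ReflTransGen (tightArc A m y) u none →
        ∀ j, u = some j → y' j ≤ y j := by
      intro u hu
      induction hu using Relation.ReflTransGen.head_induction_on with
      | refl => intro j hj; cases hj
      | head hab hbc ih =>
        rename_i a b
        intro j hj
        subst hj
        cases b with
        | none =>
          have e : y j = A (m j) j := hab
          rw [e]; exact (h1 j).2
        | some k =>
          have e : m j ≠ m k ∧ y k - y j = A (m j) k - A (m j) j := hab
          have := h2 j k e.1
          have := ih k rfl
          linarith [e.2]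
    exact gen _ (hreach (some j)) j rfl

end
end

section
/- Let γ=(F,W,A,r) be a capacity-balanced many-to-one assignment market with nonempty W and optimal matching μ, and let y∈C(W). If y is the coordinatewise minimum element of C(W), then there exists a worker j∈W with y_j = 0; if y is the coordinatewise maximum element of C(W), then there exists a worker j∈W with y_j = a_{j^μ j}. -/
set_option linter.unusedSectionVars false
set_option linter.unusedVariables false

open Finset
open scoped Classical

noncomputable section

variable {F W : Type*} [Fintype F] [Fintype W]

/-- at the minimum vector of competitive salaries some worker has zero
salary, and at the maximum vector some worker `j` gets the whole surplus `a_{j^μ j}`. -/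
theorem side_optimal_tight_worker (A : F → W → ℝ) (r : F → ℕ)
    (hA : ∀ i j, 0 ≤ A i j) (hbal : ∑ i, r i = Fintype.card W)
    (hW : Nonempty W)
    (m : W → F) (hm : IsBalancedOptimal A r m)
    (y : W → ℝ) (hy : y ∈ CW A m) :
    ((∀ y' ∈ CW A m, ∀ j : W, y j ≤ y' j) → ∃ j : W, y j = 0) ∧
    ((∀ y' ∈ CW A m, ∀ j : W, y' j ≤ y j) → ∃ j : W, y j = A (m j) j) := by
  obtain ⟨h1, h2⟩ := hy
  constructor
  · intro h
    obtain ⟨j, hj⟩ := Finite.exists_min y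
    refine ⟨j, ?_⟩
    have hc : (fun k => y k - y j) ∈ CW A m := by
      refine ⟨fun k => ⟨?_, ?_⟩, fun k l hkl => ?_⟩
      · have := hj k
        show 0 ≤ y k - y j
        linarith
      · have := (h1 k).2
        have := (h1 j).1
        show y k - y j ≤ A (m k) k
        linarith
      · have := h2 k l hkl
        show A (m k) l - A (m k) k ≤ (y l - y j) - (y k - y j)
        linarith
    have h3 : y j ≤ y j - y j := h _ hc j
    have := (h1 j).1
    linarith
  · intro h
    obtain ⟨j, hj⟩ := Finite.exists_min (fun k => A (m k) k - y k)
    refine ⟨j, ?_⟩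
    have hc : (fun k => y k + (A (m j) j - y j)) ∈ CW A m := by
      refine ⟨fun k => ⟨?_, ?_⟩, fun k l hkl => ?_⟩
      · have := (h1 k).1
        have := (h1 j).2
        show 0 ≤ y k + (A (m j) j - y j)
        linarith
      · have : A (m j) j - y j ≤ A (m k) k - y k := hj k
        show y k + (A (m j) j - y j) ≤ A (m k) k
        linarith
      · have := h2 k l hkl
        show A (m k) l - A (m k) k ≤
          (y l + (A (m j) j - y j)) - (y k + (A (m j) j - y j))
        linarith
    have h3 : y j + (A (m j) j - y j) ≤ y j := h _ hc j
    have := (h1 j).2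
    linarith

end
end

section
/- Let γ=(F,W,A,r) be a capacity-balanced many-to-one assignment market with optimal matching μ, θ an order on W, and θ̃ an extension of θ (a labeling of each position by min or max). If the max-min salary vector y^θ̃ belongs to C(W), then y^θ̃ is an extreme point of C(W). -/
set_option linter.unusedSectionVars false
set_option linter.unusedVariables false

open Finset
open scoped Classical

noncomputable section

variable {F W : Type*} [Fintype F] [Fintype W]

/-- the set of predecessors of position `s` under the order `θ` on the workers -/
def predsOf {n : ℕ} (θ : Fin n ≃ W) (s : Fin n) : Finset W :=
  (univ.filter fun t : Fin n => t < s).image θ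

/-- `y` is the max-min salary vector associated with the extended order given by the
order `θ` on `W` and the labels `ε` (`true` = max, `false` = min): each worker in turn
maximizes or minimizes his/her salary given the salaries of his/her predecessors. -/
def IsMaxMinVector (A : F → W → ℝ) (m : W → F) {n : ℕ} (θ : Fin n ≃ W)
    (ε : Fin n → Bool) (y : W → ℝ) : Prop :=
  ∀ s : Fin n,
    y (θ s) =
      if ε s then
        (insert (A (m (θ s)) (θ s))
          (((predsOf θ s).filter fun j => m j ≠ m (θ s)).image
            fun j => y j - A (m (θ s)) j + A (m (θ s)) (θ s))).min'
          (insert_nonempty _ _)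
      else
        (insert (0 : ℝ)
          (((predsOf θ s).filter fun j => m j ≠ m (θ s)).image
            fun j => y j - A (m j) j + A (m j) (θ s))).max'
          (insert_nonempty _ _)

lemma seg_eq_of_ge (a b u v c : ℝ) (ha : 0 < a) (hb : 0 < b) (hab : a + b = 1)
    (h : a * u + b * v = c) (hu : c ≤ u) (hv : c ≤ v) : u = c ∧ v = c := by
  have e : a * (u - c) + b * (v - c) = 0 := by linear_combination h - c * hab
  have h1 : 0 ≤ a * (u - c) := mul_nonneg ha.le (by linarith)
  have h2 : 0 ≤ b * (v - c) := mul_nonneg hb.le (by linarith)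
  have h3 : a * (u - c) = 0 := by linarith
  have h4 : b * (v - c) = 0 := by linarith
  constructor
  · rcases mul_eq_zero.mp h3 with h | h <;> linarith
  · rcases mul_eq_zero.mp h4 with h | h <;> linarith

lemma seg_eq_of_le (a b u v c : ℝ) (ha : 0 < a) (hb : 0 < b) (hab : a + b = 1)
    (h : a * u + b * v = c) (hu : u ≤ c) (hv : v ≤ c) : u = c ∧ v = c := by
  have := seg_eq_of_ge a b (-u) (-v) (-c) ha hb hab (by linarith) (by linarith) (by linarith)
  constructor <;> linarith [this.1, this.2]

/-- a max-min salary vector that belongs to `C(W)` is an extreme point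
of `C(W)`. -/
theorem maxmin_in_CW_is_extreme (A : F → W → ℝ) (r : F → ℕ)
    (hA : ∀ i j, 0 ≤ A i j) (hbal : ∑ i, r i = Fintype.card W)
    (m : W → F) (hm : IsBalancedOptimal A r m)
    {n : ℕ} (θ : Fin n ≃ W) (ε : Fin n → Bool) (y : W → ℝ)
    (hmaxmin : IsMaxMinVector A m θ ε y) (hy : y ∈ CW A m) :
    y ∈ Set.extremePoints ℝ (CW A m) := by
  rw [mem_extremePoints_iff_left]
  refine ⟨hy, ?_⟩
  rintro x₁ hx₁ x₂ hx₂ ⟨a, b, ha, hb, hab, hxy⟩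
  have hpt : ∀ j, a * x₁ j + b * x₂ j = y j := fun j => by
    have := congrFun hxy j
    simpa using this
  have key : ∀ s : Fin n, x₁ (θ s) = y (θ s) ∧ x₂ (θ s) = y (θ s) := by
    intro s
    induction s using WellFoundedLT.induction with
    | ind s ih =>
      have hs := hmaxmin s
      split_ifs at hs with hε
      · have hmem := Finset.min'_mem _ (insert_nonempty (A (m (θ s)) (θ s))
          (((predsOf θ s).filter fun j => m j ≠ m (θ s)).image
            fun j => y j - A (m (θ s)) j + A (m (θ s)) (θ s)))
        rw [← hs, Finset.mem_insert, Finset.mem_image] at hmem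
        apply seg_eq_of_le a b _ _ _ ha hb hab (hpt _)
        all_goals
          rcases hmem with h | ⟨j, hj, h⟩
        · rw [h]; exact (hx₁.1 _).2
        · obtain ⟨hj1, hj2⟩ := Finset.mem_filter.mp hj
          obtain ⟨t, ht, rfl⟩ := Finset.mem_image.mp hj1
          have h1 := ih t (Finset.mem_filter.mp ht).2
          have h2 := hx₁.2 _ _ hj2.symm
          linarith [h1.1]
        · rw [h]; exact (hx₂.1 _).2
        · obtain ⟨hj1, hj2⟩ := Finset.mem_filter.mp hj
          obtain ⟨t, ht, rfl⟩ := Finset.mem_image.mp hj1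
          have h1 := ih t (Finset.mem_filter.mp ht).2
          have h2 := hx₂.2 _ _ hj2.symm
          linarith [h1.2]
      · have hmem := Finset.max'_mem _ (insert_nonempty (0 : ℝ)
          (((predsOf θ s).filter fun j => m j ≠ m (θ s)).image
            fun j => y j - A (m j) j + A (m j) (θ s)))
        rw [← hs, Finset.mem_insert, Finset.mem_image] at hmem
        apply seg_eq_of_ge a b _ _ _ ha hb hab (hpt _)
        all_goals
          rcases hmem with h | ⟨j, hj, h⟩
        · rw [h]; exact (hx₁.1 _).1
        · obtain ⟨hj1, hj2⟩ := Finset.mem_filter.mp hj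
          obtain ⟨t, ht, rfl⟩ := Finset.mem_image.mp hj1
          have h1 := ih t (Finset.mem_filter.mp ht).2
          have h2 := hx₁.2 _ _ hj2
          linarith [h1.1]
        · rw [h]; exact (hx₂.1 _).1
        · obtain ⟨hj1, hj2⟩ := Finset.mem_filter.mp hj
          obtain ⟨t, ht, rfl⟩ := Finset.mem_image.mp hj1
          have h1 := ih t (Finset.mem_filter.mp ht).2
          have h2 := hx₂.2 _ _ hj2
          linarith [h1.2]
  funext j
  have := (key (θ.symm j)).1
  simpa using this

end
end

section
/- Let γ=(F,W,A,r) be a capacity-balanced many-to-one assignment market with optimal matching μ. Then every extreme point of C(W) equals the max-min salary vector y^θ̃ for some extended order θ̃ on W; that is, Ext(C(W)) ⊆ { y^θ̃ : θ̃ an extended order on W }. -/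
set_option linter.unusedSectionVars false
set_option linter.unusedVariables false

open Finset
open scoped Classical

noncomputable section

variable {F W : Type*} [Fintype F] [Fintype W]

lemma ev_aux (a b d : ℝ) (h : a ≤ b) (h2 : a = b → d = 0) :
    ∀ᶠ e in nhds (0:ℝ), a ≤ b + e * d := by
  rcases h.lt_or_eq with h | h
  · have hc : Filter.Tendsto (fun e : ℝ => b + e * d) (nhds 0) (nhds (b + 0 * d)) := by
      apply Continuous.tendsto; fun_prop
    have := hc.eventually (lt_mem_nhds (a := a) (by simpa using h))
    exact this.mono fun e he => he.le
  · rw [h2 h]; simp [h]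

def TightTo (A : F → W → ℝ) (m : W → F) (y : W → ℝ) (S : Finset W) (k : W) : Prop :=
  y k = 0 ∨ y k = A (m k) k ∨ ∃ j ∈ S, m j ≠ m k ∧
    (y k = y j - A (m j) j + A (m j) k ∨ y k = y j - A (m k) j + A (m k) k)

lemma exists_tight (A : F → W → ℝ) (m : W → F) (y : W → ℝ)
    (hy : y ∈ Set.extremePoints ℝ (CW A m)) (S : Finset W) (hS : ∃ k, k ∉ S) :
    ∃ k, k ∉ S ∧ TightTo A m y S k := by
  by_contra hcon
  push Not at hcon
  obtain ⟨⟨hb, hd⟩, hext⟩ := hy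
  set d : W → ℝ := fun k => if k ∈ S then 0 else 1 with hdd
  have hev : ∀ᶠ e in nhds (0:ℝ), (fun k => y k + e * d k) ∈ CW A m := by
    have h1 : ∀ᶠ e in nhds (0:ℝ), ∀ j, 0 ≤ y j + e * d j := by
      rw [Filter.eventually_all]
      intro j
      apply ev_aux _ _ _ (hb j).1
      intro h
      by_contra hj
      have hjS : j ∉ S := by intro h'; simp [hdd, h'] at hj
      exact hcon j hjS (Or.inl h.symm)
    have h2 : ∀ᶠ e in nhds (0:ℝ), ∀ j, 0 ≤ (A (m j) j - y j) + e * (- d j) := by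
      rw [Filter.eventually_all]
      intro j
      apply ev_aux _ _ _ (by linarith [(hb j).2])
      intro h
      by_contra hj
      have hjS : j ∉ S := by intro h'; simp [hdd, h'] at hj
      exact hcon j hjS (Or.inr (Or.inl (by linarith)))
    have h3 : ∀ᶠ e in nhds (0:ℝ), ∀ j k, m j ≠ m k →
        A (m j) k - A (m j) j ≤ (y k - y j) + e * (d k - d j) := by
      rw [Filter.eventually_all]
      intro j
      rw [Filter.eventually_all]
      intro k
      by_cases hjk : m j = m k
      · simp [hjk]
      have := ev_aux _ _ (d k - d j) (hd j k hjk) (by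
        intro h
        by_cases hj : j ∈ S <;> by_cases hk : k ∈ S
        · simp [hdd, hj, hk]
        · exact absurd (Or.inr (Or.inr ⟨j, hj, hjk, Or.inl (by linarith)⟩)) (hcon k hk)
        · exact absurd (Or.inr (Or.inr ⟨k, hk, fun h => hjk h.symm, Or.inr (by linarith)⟩))
            (hcon j hj)
        · simp [hdd, hj, hk])
      exact this.mono fun e he _ => he
    filter_upwards [h1, h2, h3] with e h1 h2 h3
    refine ⟨fun j => ⟨h1 j, ?_⟩, fun j k hjk => ?_⟩
    · have := h2 j; simp only; linarith
    · have := h3 j k hjk; simp only; linarith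
  obtain ⟨δ, hδ, hball⟩ := Metric.eventually_nhds_iff.1 hev
  have hp := hball (y := δ/2) (by rw [Real.dist_eq, abs_lt]; constructor <;> linarith)
  have hn := hball (y := -(δ/2)) (by rw [Real.dist_eq, abs_lt]; constructor <;> linarith)
  have := hext hp hn ⟨1/2, 1/2, by norm_num, by norm_num, by norm_num, by
    ext k; simp only [Pi.add_apply, Pi.smul_apply, smul_eq_mul]; ring⟩
  obtain ⟨k, hk⟩ := hS
  have h := congrFun this k
  simp [hdd, hk] at h
  linarith

def seqS (pick : Finset W → W) : ℕ → Finset W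
  | 0 => ∅
  | n + 1 => insert (pick (seqS pick n)) (seqS pick n)

lemma seqS_eq (pick : Finset W → W) (n : ℕ) :
    seqS pick n = (Finset.range n).image fun t => pick (seqS pick t) := by
  induction n with
  | zero => simp [seqS]
  | succ n ih => rw [Finset.range_add_one, Finset.image_insert, ← ih, seqS]

/-- every extreme point of `C(W)` is the max-min salary vector of some
extended order on the set of workers. -/
theorem extreme_is_maxmin (A : F → W → ℝ) (r : F → ℕ)
    (hA : ∀ i j, 0 ≤ A i j) (hbal : ∑ i, r i = Fintype.card W)
    (m : W → F) (hm : IsBalancedOptimal A r m)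
    (y : W → ℝ) (hy : y ∈ Set.extremePoints ℝ (CW A m)) :
    ∃ (θ : Fin (Fintype.card W) ≃ W) (ε : Fin (Fintype.card W) → Bool),
      IsMaxMinVector A m θ ε y := by
  obtain ⟨θ, hθ⟩ : ∃ θ : Fin (Fintype.card W) ≃ W, ∀ s, TightTo A m y (predsOf θ s) (θ s) := by
    rcases isEmpty_or_nonempty W with hW | hW
    · refine ⟨(Fintype.equivFin W).symm, fun s => ?_⟩
      exact isEmptyElim ((Fintype.equivFin W).symm s)
    have hpick : ∀ S : Finset W, ∃ k : W, (∃ k, k ∉ S) → k ∉ S ∧ TightTo A m y S k := by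
      intro S
      by_cases h : ∃ k, k ∉ S
      · obtain ⟨k, hk⟩ := exists_tight A m y hy S h
        exact ⟨k, fun _ => hk⟩
      · exact ⟨Classical.arbitrary W, fun h' => absurd h' h⟩
    choose pick hpick using hpick
    have hcard : ∀ n, (seqS pick n).card ≤ n := by
      intro n
      rw [seqS_eq]
      exact Finset.card_image_le.trans (by simp)
    have hex : ∀ n < Fintype.card W, ∃ k, k ∉ seqS pick n := by
      intro n hn
      by_contra hc
      push Not at hc
      have := hcard n
      rw [Finset.eq_univ_iff_forall.2 hc, Finset.card_univ] at this
      omega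
    have hmem : ∀ s t : ℕ, s < t → pick (seqS pick s) ∈ seqS pick t := by
      intro s t hst
      rw [seqS_eq pick t]
      exact Finset.mem_image.2 ⟨s, by simpa using hst, rfl⟩
    have hinj : Function.Injective
        (fun s : Fin (Fintype.card W) => pick (seqS pick (s : ℕ))) := by
      intro s t hst
      simp only at hst
      rcases lt_trichotomy (s : ℕ) t with h | h | h
      · exact absurd (hst ▸ hmem _ _ h) (hpick _ (hex _ t.2)).1
      · exact Fin.ext h
      · exact absurd (hst ▸ hmem _ _ h) (hpick _ (hex _ s.2)).1
    refine ⟨Equiv.ofBijective _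
      ((Fintype.bijective_iff_injective_and_card _).2 ⟨hinj, by simp⟩), fun s => ?_⟩
    have hp : predsOf (Equiv.ofBijective _
      ((Fintype.bijective_iff_injective_and_card _).2 ⟨hinj, by simp⟩)) s = seqS pick s := by
      rw [seqS_eq]
      ext k
      simp only [predsOf, Finset.mem_image, Finset.mem_filter, Finset.mem_univ, true_and,
        Equiv.ofBijective_apply, Finset.mem_range]
      constructor
      · rintro ⟨t, ht, rfl⟩
        exact ⟨t, ht, rfl⟩
      · rintro ⟨t, ht, rfl⟩
        exact ⟨⟨t, ht.trans s.2⟩, ht, rfl⟩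
    rw [hp]
    exact (hpick _ (hex _ s.2)).2
  obtain ⟨⟨hb, hd⟩, -⟩ := hy
  have key : ∀ s, ∃ b : Bool, y (θ s) =
      if b then
        (insert (A (m (θ s)) (θ s))
          (((predsOf θ s).filter fun j => m j ≠ m (θ s)).image
            fun j => y j - A (m (θ s)) j + A (m (θ s)) (θ s))).min'
          (insert_nonempty _ _)
      else
        (insert (0 : ℝ)
          (((predsOf θ s).filter fun j => m j ≠ m (θ s)).image
            fun j => y j - A (m j) j + A (m j) (θ s))).max'
          (insert_nonempty _ _) := by
    intro s
    have hmin : y (θ s) ∈ (insert (A (m (θ s)) (θ s))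
          (((predsOf θ s).filter fun j => m j ≠ m (θ s)).image
            fun j => y j - A (m (θ s)) j + A (m (θ s)) (θ s))) → y (θ s) =
        (insert (A (m (θ s)) (θ s))
          (((predsOf θ s).filter fun j => m j ≠ m (θ s)).image
            fun j => y j - A (m (θ s)) j + A (m (θ s)) (θ s))).min'
          (insert_nonempty _ _) := by
      intro h
      refine le_antisymm (Finset.le_min' _ _ _ ?_) (Finset.min'_le _ _ h)
      intro x hx
      rcases Finset.mem_insert.1 hx with rfl | hx
      · exact (hb _).2
      · obtain ⟨j, hj, rfl⟩ := Finset.mem_image.1 hx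
        have := hd (θ s) j (Ne.symm (Finset.mem_filter.1 hj).2)
        linarith
    have hmax : y (θ s) ∈ (insert (0 : ℝ)
          (((predsOf θ s).filter fun j => m j ≠ m (θ s)).image
            fun j => y j - A (m j) j + A (m j) (θ s))) → y (θ s) =
        (insert (0 : ℝ)
          (((predsOf θ s).filter fun j => m j ≠ m (θ s)).image
            fun j => y j - A (m j) j + A (m j) (θ s))).max'
          (insert_nonempty _ _) := by
      intro h
      refine le_antisymm (Finset.le_max' _ _ h) (Finset.max'_le _ _ _ ?_)
      intro x hx
      rcases Finset.mem_insert.1 hx with rfl | hx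
      · exact (hb _).1
      · obtain ⟨j, hj, rfl⟩ := Finset.mem_image.1 hx
        have := hd j (θ s) (Finset.mem_filter.1 hj).2
        linarith
    rcases hθ s with h | h | ⟨j, hj, hne, h | h⟩
    · exact ⟨false, by simpa using hmax (Finset.mem_insert.2 (Or.inl h))⟩
    · exact ⟨true, by simpa using hmin (Finset.mem_insert.2 (Or.inl h))⟩
    · exact ⟨false, by
        simpa using hmax (Finset.mem_insert.2 (Or.inr (Finset.mem_image.2
          ⟨j, Finset.mem_filter.2 ⟨hj, hne⟩, h.symm⟩)))⟩
    · exact ⟨true, by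
        simpa using hmin (Finset.mem_insert.2 (Or.inr (Finset.mem_image.2
          ⟨j, Finset.mem_filter.2 ⟨hj, hne⟩, h.symm⟩)))⟩
  choose ε hε using key
  exact ⟨θ, ε, hε⟩

end
end

section
/- Let (B,S,A,r) be a capacity-balanced many-to-one buyer-seller market where buyers have unit capacity, and let μ be an optimal matching. Then (x,y)∈ℝ^B×ℝ^S is a competitive equilibrium payoff vector if and only if: (i) 0 ≤ x_i ≤ a_{iμ(i)} for all i∈B; (ii) x_k − x_i ≥ a_{kμ(i)} − a_{iμ(i)} for all i,k∈B; and (iii) y_j = Σ_{i∈B : μ(i)=j} (a_{ij} − x_i) for all j∈S. -/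
set_option linter.unusedSectionVars false
set_option linter.unusedVariables false

open Finset
open scoped Classical

noncomputable section

variable {B S : Type*} [Fintype B] [Fintype S]

/-- `ν` is a matching of the buyer-seller market: each buyer appears in at most one
pair, and each seller `j` in at most `r j` pairs. -/
def IsBSMatching (r : S → ℕ) (ν : Finset (B × S)) : Prop :=
  (∀ i : B, (ν.filter fun p => p.1 = i).card ≤ 1) ∧
  (∀ j : S, (ν.filter fun p => p.2 = j).card ≤ r j)

/-- `μ : B → S` represents an optimal matching of the capacity-balanced buyer-seller
market: each seller `j` is matched to exactly `r j` buyers and the total value of `μ`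
is maximal among all matchings. -/
def IsBSBalancedOptimal (A : B → S → ℝ) (r : S → ℕ) (μ : B → S) : Prop :=
  (∀ j : S, (univ.filter fun i => μ i = j).card = r j) ∧
  ∀ ν : Finset (B × S), IsBSMatching r ν → ∑ p ∈ ν, A p.1 p.2 ≤ ∑ i : B, A i (μ i)

/-- in a capacity-balanced buyer-seller market with unit-demand buyers,
`(x,y)` is a competitive equilibrium payoff vector iff (i) `0 ≤ x i ≤ a_{i μ(i)}` for
all buyers, (ii) `x k - x i ≥ a_{k μ(i)} - a_{i μ(i)}` for all pairs of buyers, and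
(iii) each seller's payoff equals the total surplus left by its assigned buyers. -/
theorem buyerSeller_CE_characterization (A : B → S → ℝ) (r : S → ℕ)
    (hA : ∀ i j, 0 ≤ A i j) (hbal : Fintype.card B = ∑ j : S, r j)
    (μ : B → S) (hμ : IsBSBalancedOptimal A r μ) (x : B → ℝ) (y : S → ℝ) :
    (∃ p : S → ℝ, (∀ j : S, 0 ≤ p j) ∧
        (∀ (i : B) (j : S), A i j - p j ≤ A i (μ i) - p (μ i)) ∧
        (∀ i : B, 0 ≤ A i (μ i) - p (μ i)) ∧
        (∀ i : B, x i = A i (μ i) - p (μ i)) ∧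
        (∀ j : S, y j = (r j : ℝ) * p j)) ↔
      ((∀ i : B, 0 ≤ x i ∧ x i ≤ A i (μ i)) ∧
       (∀ i k : B, A k (μ i) - A i (μ i) ≤ x k - x i) ∧
       (∀ j : S, y j = ∑ i ∈ univ.filter (fun i => μ i = j), (A i j - x i))) := by
  constructor
  · rintro ⟨p, hp, h1, h2, hx, hy⟩
    refine ⟨fun i => ⟨?_, ?_⟩, fun i k => ?_, fun j => ?_⟩
    · rw [hx]; exact h2 i
    · rw [hx]; linarith [hp (μ i)]
    · rw [hx, hx]; linarith [h1 k (μ i)]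
    · rw [hy, ← hμ.1 j, ← nsmul_eq_mul, ← Finset.sum_const]
      apply Finset.sum_congr rfl
      intro i hi
      have hij : μ i = j := (Finset.mem_filter.mp hi).2
      rw [hx, hij]; ring
  · rintro ⟨h1, h2, hy⟩
    have key : ∀ j : S, ∃ q : ℝ, 0 ≤ q ∧ (∀ i, μ i = j → q = A i j - x i) ∧
        (∀ i, A i j - q ≤ x i) := by
      intro j
      by_cases h : ∃ i, μ i = j
      · obtain ⟨i, rfl⟩ := h
        refine ⟨A i (μ i) - x i, by linarith [(h1 i).2], fun k hk => ?_, fun k => ?_⟩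
        · have e1 := h2 i k
          have e2 := h2 k i
          rw [hk] at e2
          linarith
        · linarith [h2 i k]
      · refine ⟨∑ i, A i j, Finset.sum_nonneg fun i _ => hA i j,
          fun i hi => absurd ⟨i, hi⟩ h, fun i => ?_⟩
        have := Finset.single_le_sum (f := fun i => A i j) (fun i _ => hA i j)
          (Finset.mem_univ i)
        linarith [(h1 i).1]
    choose p hp0 hp1 hp2 using key
    have hx : ∀ i, x i = A i (μ i) - p (μ i) := fun i => by
      rw [hp1 (μ i) i rfl]; ring
    refine ⟨p, hp0, fun i j => ?_, fun i => ?_, hx, fun j => ?_⟩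
    · rw [← hx]; exact hp2 j i
    · rw [← hx]; exact (h1 i).1
    · rw [hy, ← hμ.1 j, ← nsmul_eq_mul, ← Finset.sum_const]
      apply Finset.sum_congr rfl
      intro i hi
      exact (hp1 j i (Finset.mem_filter.mp hi).2).symm

end
end
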